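/- arXiv:2003.06146 — 3 statements merged into one kernel-verified Lean document; each statement's English description precedes it below -/
import Mathlib

section
/- Let P be a finite set of points in projective r-space over an algebraically closed field and let d ≥ 2 be an integer. If for all k ≥ 1 no dk + 2 points of P lie in a projective k-plane, then P imposes independent conditions on forms of degree d; in fact for each point p of P there is a form of degree d vanishing on P \ {p} but not at p. -/
open MvPolynomial

theorem rado_aux {ι E : Type*} [DecidableEq ι] [DecidableEq E] [Nonempty E] (I : Finset ι)
    (ρ : Finset E → ℤ) (h0 : ρ ∅ ≤ 0) (hmono : ∀ X Y, X ⊆ Y → ρ X ≤ ρ Y)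
    (hsub : ∀ X Y, ρ (X ∪ Y) + ρ (X ∩ Y) ≤ ρ X + ρ Y) (n : ℕ) :
    ∀ S : ι → Finset E, ∑ i ∈ I, (S i).card = n →
      (∀ A ⊆ I, (A.card : ℤ) ≤ ρ (A.biUnion S)) →
      ∃ t : ι → E, (∀ i ∈ I, t i ∈ S i) ∧ ∀ A ⊆ I, (A.card : ℤ) ≤ ρ (A.image t) := by
  induction n using Nat.strong_induction_on with
  | _ n ih =>
  intro S hS hA
  by_cases hc : ∀ i ∈ I, (S i).card ≤ 1
  · have hne : ∀ i ∈ I, ∃ x, S i = {x} := by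
      intro i hi
      have h1 := hA {i} (by simpa using hi)
      rw [← Finset.card_eq_one]
      have : (S i) ≠ ∅ := by
        intro h
        simp [h] at h1
        omega
      have := Finset.card_pos.2 (Finset.nonempty_iff_ne_empty.2 this)
      have := hc i hi
      omega
    have : ∀ i, ∃ x, i ∈ I → S i = {x} := by
      intro i
      by_cases hi : i ∈ I
      · obtain ⟨x, hx⟩ := hne i hi
        exact ⟨x, fun _ => hx⟩
      · exact ⟨Classical.arbitrary E, fun h => (hi h).elim⟩
    choose t ht using this
    refine ⟨t, fun i hi => by simp [ht i hi], fun A hAI => ?_⟩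
    refine (hA A hAI).trans (hmono _ _ ?_)
    intro z hz
    obtain ⟨i, hi, hz⟩ := Finset.mem_biUnion.1 hz
    rw [ht i (hAI hi), Finset.mem_singleton] at hz
    exact Finset.mem_image.2 ⟨i, hi, hz.symm⟩
  · push Not at hc
    obtain ⟨i, hi, hcard⟩ := hc
    obtain ⟨x, hx, y, hy, hxy⟩ := Finset.one_lt_card.1 hcard
    have key : ∀ z ∈ S i, (∀ A ⊆ I, (A.card : ℤ) ≤
        ρ (A.biUnion (Function.update S i ((S i).erase z)))) →
        ∃ t : ι → E, (∀ i ∈ I, t i ∈ S i) ∧ ∀ A ⊆ I, (A.card : ℤ) ≤ ρ (A.image t) := by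
      intro z hz h
      have hle : ∀ j, Function.update S i ((S i).erase z) j ⊆ S j := by
        intro j
        by_cases hj : j = i
        · subst hj
          simp [Finset.erase_subset]
        · simp [hj]
      obtain ⟨t, ht, ht'⟩ := ih _ (by
        rw [← hS]
        refine Finset.sum_lt_sum (fun j _ => Finset.card_le_card (hle j)) ⟨i, hi, ?_⟩
        simpa using Finset.card_erase_lt_of_mem hz) _ rfl h
      exact ⟨t, fun j hj => hle j (ht j hj), ht'⟩
    by_contra hcon
    have hx' := mt (key x hx) hcon
    have hy' := mt (key y hy) hcon
    push Not at hx' hy'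
    obtain ⟨A, hAI, hAlt⟩ := hx'
    obtain ⟨B, hBI, hBlt⟩ := hy'
    have hmem : ∀ z, ∀ A ⊆ I, ρ (A.biUnion (Function.update S i ((S i).erase z))) < A.card →
        i ∈ A := by
      intro z A hAI hlt
      by_contra hiA
      have e : A.biUnion (Function.update S i ((S i).erase z)) = A.biUnion S := by
        refine Finset.biUnion_congr rfl fun j hj => ?_
        have : j ≠ i := by
          rintro rfl
          exact hiA hj
        simp [this]
      rw [e] at hlt
      have := hA A hAI
      omega
    have hiA := hmem x A hAI hAlt
    have hiB := hmem y B hBI hBlt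
    have h1 := hsub (A.biUnion (Function.update S i ((S i).erase x)))
      (B.biUnion (Function.update S i ((S i).erase y)))
    have h2 : ρ ((A ∪ B).biUnion S) ≤ ρ ((A.biUnion (Function.update S i ((S i).erase x))) ∪
      (B.biUnion (Function.update S i ((S i).erase y)))) := by
      refine hmono _ _ ?_
      intro z hz
      obtain ⟨j, hj, hz⟩ := Finset.mem_biUnion.1 hz
      rw [Finset.mem_union, Finset.mem_biUnion, Finset.mem_biUnion]
      by_cases hji : j = i
      · subst hji
        by_cases hzx : z = x
        · right
          refine ⟨j, hiB, ?_⟩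
          simp [hz, hzx, hxy, hx]
        · left
          refine ⟨j, hiA, ?_⟩
          simp [hz, hzx]
      · rcases Finset.mem_union.1 hj with h | h
        · left
          exact ⟨j, h, by simpa [hji] using hz⟩
        · right
          exact ⟨j, h, by simpa [hji] using hz⟩
    have h3 : ρ (((A ∩ B).erase i).biUnion S) ≤
      ρ ((A.biUnion (Function.update S i ((S i).erase x))) ∩
      (B.biUnion (Function.update S i ((S i).erase y)))) := by
      refine hmono _ _ ?_
      intro z hz
      obtain ⟨j, hj, hz⟩ := Finset.mem_biUnion.1 hz
      rw [Finset.mem_erase, Finset.mem_inter] at hj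
      rw [Finset.mem_inter, Finset.mem_biUnion, Finset.mem_biUnion]
      exact ⟨⟨j, hj.2.1, by simpa [hj.1] using hz⟩, ⟨j, hj.2.2, by simpa [hj.1] using hz⟩⟩
    have h4 := hA (A ∪ B) (Finset.union_subset hAI hBI)
    have h5 := hA ((A ∩ B).erase i) ((Finset.erase_subset _ _).trans
      (Finset.inter_subset_left.trans hAI))
    have h6 := Finset.card_union_add_card_inter A B
    have h7 := Finset.card_erase_add_one (Finset.mem_inter.2 ⟨hiA, hiB⟩)
    omega

/-- rank relative to `p` -/
noncomputable def relRank {K V ι : Type*} [Field K] [AddCommGroup V] [Module K V]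
    (p : V) (v : ι → V) (X : Set ι) : ℤ :=
  (Module.finrank K (Submodule.span K (insert p (v '' X))) : ℤ) - 1

theorem relRank_mono {K V ι : Type*} [Field K] [AddCommGroup V] [Module K V]
    [FiniteDimensional K V] (p : V) (v : ι → V) {X Y : Set ι} (h : X ⊆ Y) :
    relRank (K := K) p v X ≤ relRank (K := K) p v Y := by
  unfold relRank
  have := Submodule.finrank_mono (R := K) (Submodule.span_mono
    (R := K) (Set.insert_subset_insert (a := p) (Set.image_mono (f := v) h)))
  omega

theorem relRank_sub {K V ι : Type*} [Field K] [AddCommGroup V] [Module K V]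
    [FiniteDimensional K V] (p : V) (v : ι → V) (X Y : Set ι) :
    relRank (K := K) p v (X ∪ Y) + relRank (K := K) p v (X ∩ Y) ≤
      relRank (K := K) p v X + relRank (K := K) p v Y := by
  unfold relRank
  have h1 := Submodule.finrank_sup_add_finrank_inf_eq
    (Submodule.span K (insert p (v '' X))) (Submodule.span K (insert p (v '' Y)))
  rw [← Submodule.span_union, ← Set.insert_union_distrib, ← Set.image_union] at h1
  have h2 : Submodule.span K (insert p (v '' (X ∩ Y))) ≤
    (Submodule.span K (insert p (v '' X))) ⊓ (Submodule.span K (insert p (v '' Y))) :=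
    le_inf (Submodule.span_mono (Set.insert_subset_insert (Set.image_mono Set.inter_subset_left)))
      (Submodule.span_mono (Set.insert_subset_insert (Set.image_mono Set.inter_subset_right)))
  have := Submodule.finrank_mono (R := K) h2
  omega

theorem relRank_empty {K V ι : Type*} [Field K] [AddCommGroup V] [Module K V]
    (p : V) (hp : p ≠ 0) (v : ι → V) : relRank (K := K) p v ∅ = 0 := by
  unfold relRank
  rw [Set.image_empty, insert_empty_eq, finrank_span_singleton hp]
  simp

/-- Edmonds-type partition. -/
theorem partition_aux {K V ι : Type*} [Field K] [AddCommGroup V] [Module K V]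
    [FiniteDimensional K V] [DecidableEq ι] (p : V) (hp : p ≠ 0) (v : ι → V) (I : Finset ι)
    (d : ℕ) (hd : 0 < d)
    (h : ∀ A ⊆ I, (A.card : ℤ) ≤ d * relRank (K := K) p v (A : Set ι)) :
    ∃ t : ι → Fin d, ∀ j, p ∉ Submodule.span K (v '' {i | i ∈ I ∧ t i = j}) := by
  by_cases hI : I = ∅
  · subst hI
    exact ⟨fun _ => ⟨0, hd⟩, fun j => by simpa using hp⟩
  obtain ⟨i0, _⟩ := Finset.nonempty_iff_ne_empty.2 hI
  haveI : Nonempty (ι × Fin d) := ⟨(i0, ⟨0, hd⟩)⟩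
  obtain ⟨t, ht, htA⟩ := rado_aux (E := ι × Fin d) I
    (fun X => ∑ j, relRank (K := K) p v {i | (i, j) ∈ X})
    (by simp [relRank_empty p hp v])
    (fun X Y hXY => Finset.sum_le_sum fun j _ => relRank_mono p v fun i hi => hXY hi)
    (fun X Y => by
      rw [← Finset.sum_add_distrib, ← Finset.sum_add_distrib]
      refine Finset.sum_le_sum fun j _ => ?_
      have e1 : {i | (i, j) ∈ X ∪ Y} = {i | (i, j) ∈ X} ∪ {i | (i, j) ∈ Y} := by
        ext; simp
      have e2 : {i | (i, j) ∈ X ∩ Y} = {i | (i, j) ∈ X} ∩ {i | (i, j) ∈ Y} := by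
        ext; simp
      rw [e1, e2]
      exact relRank_sub (K := K) p v {i | (i, j) ∈ X} {i | (i, j) ∈ Y}) _ (fun i => Finset.univ.image fun j => (i, j)) rfl
    (fun A hA => by
      have e : ∀ j : Fin d, {i | (i, j) ∈ A.biUnion
          (fun i => Finset.univ.image fun j : Fin d => (i, j))} = (A : Set ι) := by
        intro j; ext i; simp
      simp only [e]
      simpa using h A hA)
  have ht1 : ∀ i ∈ I, (t i).1 = i := by
    intro i hi
    have := ht i hi
    simp only [Finset.mem_image] at this
    obtain ⟨j, _, hj⟩ := this
    rw [← hj]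
  refine ⟨fun i => (t i).2, fun j hj => ?_⟩
  have h1 := htA (I.filter fun i => (t i).2 = j) (Finset.filter_subset _ _)
  rw [Finset.sum_eq_single j] at h1
  · have e : {i | (i, j) ∈ (I.filter fun i => (t i).2 = j).image t} =
        {i | i ∈ I ∧ (t i).2 = j} := by
      ext i
      simp only [Finset.mem_image, Finset.mem_filter, Set.mem_ofPred_eq]
      constructor
      · rintro ⟨a, ⟨ha, haj⟩, hai⟩
        have := ht1 a ha
        rw [hai] at this
        simp only at this
        subst this
        exact ⟨ha, haj⟩
      · rintro ⟨ha, haj⟩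
        exact ⟨i, ⟨ha, haj⟩, Prod.ext (ht1 i ha) haj⟩
    rw [e, relRank, Submodule.span_insert_eq_span hj] at h1
    have e2 : v '' {i | i ∈ I ∧ (t i).2 = j} =
        (((I.filter fun i => (t i).2 = j).image (fun i => i) : Finset ι) : Set ι).image v := by
      congr 1
      ext; simp
    classical
    rw [e2, ← Finset.coe_image] at h1
    have h2 := finrank_span_finset_le_card (R := K)
      (((I.filter fun i => (t i).2 = j).image (fun i => i)).image v)
    have h3 : (((I.filter fun i => (t i).2 = j).image (fun i => i)).image v).card ≤
      (I.filter fun i => (t i).2 = j).card := by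
      refine Finset.card_image_le.trans Finset.card_image_le
    unfold Set.finrank at h2
    omega
  · intro j' _ hj'
    rw [← relRank_empty (K := K) p hp v]
    congr 1
    ext i
    simp only [Finset.mem_image, Finset.mem_filter, Set.mem_ofPred_eq, Set.mem_empty_iff_false,
      iff_false]
    rintro ⟨a, ⟨ha, haj⟩, hai⟩
    rw [hai] at haj
    exact hj' haj
  · simp

/-- Eisenbud et al.: If for all `k ≥ 1` no `d*k + 2` points of a finite set `P`
in projective `r`-space over an algebraically closed field lie in a projective `k`-plane
(a linear subvariety of dimension `k`, i.e. the projectivization of a linear subspace of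
dimension `k+1`), then for each point `p ∈ P` there is a homogeneous form of degree `d`
vanishing at all points of `P \ {p}` but not at `p`; in particular `P` imposes independent
conditions on forms of degree `d`. -/
theorem stmt_0 {K : Type} [Field K] [IsAlgClosed K] (r d : ℕ) (hd : 2 ≤ d)
    (P : Finset (Projectivization K (Fin (r + 1) → K)))
    (hgen : ∀ k : ℕ, 1 ≤ k → ∀ W : Submodule K (Fin (r + 1) → K),
      Module.finrank K W = k + 1 →
      {q ∈ (P : Set (Projectivization K (Fin (r + 1) → K))) | q.rep ∈ W}.ncard < d * k + 2) :
    ∀ p ∈ P, ∃ f : MvPolynomial (Fin (r + 1)) K, f.IsHomogeneous d ∧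
      (∀ q ∈ P, q ≠ p → eval q.rep f = 0) ∧ eval p.rep f ≠ 0 := by
  classical
  intro p hpP
  obtain ⟨t, ht⟩ := partition_aux (K := K) p.rep p.rep_nonzero
    (fun q : Projectivization K (Fin (r + 1) → K) => q.rep) (P.erase p) d (by omega) (by
    intro A hA
    rcases A.eq_empty_or_nonempty with rfl | ⟨q, hq⟩
    · simp [relRank_empty p.rep p.rep_nonzero]
    set W := Submodule.span K (insert p.rep
      ((fun q : Projectivization K (Fin (r + 1) → K) => q.rep) '' (A : Set _))) with hW
    have hpW : p.rep ∈ W := Submodule.subset_span (Set.mem_insert _ _)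
    have hAW : ∀ a ∈ A, a.rep ∈ W := fun a ha =>
      Submodule.subset_span (Set.mem_insert_of_mem _ ⟨a, ha, rfl⟩)
    have hpA : p ∉ A := fun h => by simpa using hA h
    have hqp : q ≠ p := by
      rintro rfl
      exact hpA hq
    have h2 : 2 ≤ Module.finrank K W := by
      have hle : Submodule.span K {p.rep} ≤ W := by simpa using hpW
      by_contra hlt
      have hEq := Submodule.eq_of_le_of_finrank_le hle (by
        rw [finrank_span_singleton p.rep_nonzero]; omega)
      have := hAW q hq
      rw [← hEq, Submodule.mem_span_singleton] at this
      obtain ⟨a, ha⟩ := this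
      apply hqp
      rw [← q.mk_rep, ← p.mk_rep, Projectivization.mk_eq_mk_iff']
      exact ⟨a, ha⟩
    obtain ⟨k, hk⟩ : ∃ k, Module.finrank K W = k + 1 := ⟨Module.finrank K W - 1, by omega⟩
    have h3 := hgen k (by omega) W hk
    have h4 : ((insert p A : Finset _) : Set (Projectivization K (Fin (r + 1) → K))).ncard ≤
        {q ∈ (P : Set (Projectivization K (Fin (r + 1) → K))) | q.rep ∈ W}.ncard := by
      refine Set.ncard_le_ncard ?_ (P.finite_toSet.subset fun x hx => hx.1)
      intro x hx
      rcases Finset.mem_insert.1 (Finset.mem_coe.1 hx) with rfl | hx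
      · exact ⟨hpP, hpW⟩
      · exact ⟨Finset.mem_of_mem_erase (hA hx), hAW x hx⟩
    rw [Set.ncard_coe_finset, Finset.card_insert_of_notMem hpA] at h4
    have h5 : A.card ≤ d * k := by omega
    unfold relRank
    rw [← hW, hk]
    push_cast
    simpa using (by exact_mod_cast h5 : (A.card : ℤ) ≤ d * k))
  have hφ : ∀ j, ∃ φ : (Fin (r + 1) → K) →ₗ[K] K, φ p.rep ≠ 0 ∧
      ∀ q ∈ P, q ≠ p → t q = j → φ q.rep = 0 := by
    intro j
    obtain ⟨φ, h1, h2⟩ := Submodule.exists_le_ker_of_notMem (ht j)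
    refine ⟨φ, h1, fun q hq hqp hj => ?_⟩
    exact h2 (Submodule.subset_span ⟨q, ⟨Finset.mem_erase.2 ⟨hqp, hq⟩, hj⟩, rfl⟩)
  choose φ hφ1 hφ2 using hφ
  have hev : ∀ j x, eval x (∑ i, C (φ j (Pi.single i 1)) * X i) = φ j x := by
    intro j x
    simp only [map_sum, map_mul, eval_C, eval_X]
    conv_rhs => rw [LinearMap.pi_apply_eq_sum_univ (φ j) x]
    refine Finset.sum_congr rfl fun i _ => ?_
    rw [smul_eq_mul, mul_comm]
    congr 2
    ext l
    simp [Pi.single_apply, eq_comm]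
  refine ⟨∏ j : Fin d, ∑ i, C (φ j (Pi.single i 1)) * X i, ?_, ?_, ?_⟩
  · have := IsHomogeneous.prod Finset.univ
      (fun j : Fin d => ∑ i, C (φ j (Pi.single i 1)) * X i) (fun _ => 1) (fun j _ =>
        IsHomogeneous.sum _ _ _ fun i _ => isHomogeneous_C_mul_X _ _)
    simpa using this
  · intro q hq hqp
    rw [map_prod]
    exact Finset.prod_eq_zero (Finset.mem_univ (t q)) (by rw [hev]; exact hφ2 _ q hq hqp rfl)
  · rw [map_prod]
    exact Finset.prod_ne_zero_iff.2 fun j _ => by rw [hev]; exact hφ1 j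
end

section
/- (Chasles/Cayley–Bacharach) If a set Γ₁ of 8 points in the projective plane lies in the complete intersection Γ of two plane cubic curves, then any cubic form vanishing on Γ₁ vanishes on all of Γ. -/
open MvPolynomial
open Matrix

namespace CB

abbrev V := Fin 3 → ℂ

noncomputable def lin (n : V) : MvPolynomial (Fin 3) ℂ := ∑ i, C (n i) * X i

lemma eval_lin (n w : V) : eval w (lin n) = n ⬝ᵥ w := by
  simp [lin, dotProduct]

lemma lin_hom (n : V) : (lin n).IsHomogeneous 1 := by
  apply IsHomogeneous.sum
  intro i _
  exact isHomogeneous_C_mul_X _ _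

lemma lin_ne (n : V) (hn : n ≠ 0) : lin n ≠ 0 := by
  intro h
  apply hn
  ext i
  have := eval_lin n (Pi.single i 1)
  rw [h] at this
  simpa using this.symm

lemma det_zero {n u v w : V} (hn : n ≠ 0) (hu : n ⬝ᵥ u = 0) (hv : n ⬝ᵥ v = 0)
    (hw : n ⬝ᵥ w = 0) : u ⬝ᵥ v ⨯₃ w = 0 := by
  rw [triple_product_eq_det]
  refine (Matrix.exists_mulVec_eq_zero_iff (M := Matrix.of ![u, v, w])).mp ?_
  refine ⟨n, hn, ?_⟩
  ext i
  fin_cases i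
  · simpa [Matrix.mulVec, dotProduct_comm] using hu
  · simpa [Matrix.mulVec, dotProduct_comm] using hv
  · simpa [Matrix.mulVec, dotProduct_comm] using hw

lemma span_of {u v w : V} (h : u ⨯₃ v ≠ 0) (hd : u ⬝ᵥ v ⨯₃ w = 0) :
    ∃ a b : ℂ, w = a • u + b • v := by
  obtain ⟨i, hi⟩ := Function.ne_iff.mp h
  refine ⟨(w ⨯₃ v) i / (u ⨯₃ v) i, (u ⨯₃ w) i / (u ⨯₃ v) i, ?_⟩
  have hi' : (u ⨯₃ v) i ≠ 0 := hi
  have key : ∀ j, (u ⨯₃ v) i * w j = (w ⨯₃ v) i * u j + (u ⨯₃ w) i * v j := by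
    intro j
    rw [vec3_dotProduct, cross_apply] at hd
    simp only [cross_apply]
    simp at hd
    fin_cases i <;> fin_cases j <;> simp <;> first | ring1 | linear_combination hd
  ext j
  simp only [Pi.add_apply, Pi.smul_apply, smul_eq_mul]
  field_simp
  linear_combination key j

lemma parallel {u v : V} (hv : v ≠ 0) (h : u ⨯₃ v = 0) : ∃ c : ℂ, u = c • v := by
  obtain ⟨i, hi⟩ := Function.ne_iff.mp hv
  have hi' : v i ≠ 0 := hi
  refine ⟨u i / v i, ?_⟩
  have h0 := congrFun h 0
  have h1 := congrFun h 1
  have h2 := congrFun h 2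
  simp [cross_apply] at h0 h1 h2
  ext j
  simp only [Pi.smul_apply, smul_eq_mul]
  field_simp
  fin_cases i <;> fin_cases j <;> simp <;> first | ring1 | linear_combination h0 | linear_combination -h0 | linear_combination h1 | linear_combination -h1 | linear_combination h2 | linear_combination -h2

lemma exists_basis {n : V} (hn : n ≠ 0) : ∃ u v : V, n ⬝ᵥ u = 0 ∧ n ⬝ᵥ v = 0 ∧ u ⨯₃ v ≠ 0 := by
  obtain ⟨i, hi⟩ := Function.ne_iff.mp hn
  have hi' : n i ≠ 0 := hi
  fin_cases i
  · refine ⟨![-n 1, n 0, 0], ![-n 2, 0, n 0], ?_, ?_, ?_⟩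
    · rw [vec3_dotProduct]; simp; ring
    · rw [vec3_dotProduct]; simp; ring
    · intro h; have := congrFun h 0; simp [cross_apply] at this; exact hi' this
  · refine ⟨![n 1, -n 0, 0], ![0, -n 2, n 1], ?_, ?_, ?_⟩
    · rw [vec3_dotProduct]; simp; ring
    · rw [vec3_dotProduct]; simp; ring
    · intro h; have := congrFun h 1; simp [cross_apply] at this; exact hi' this
  · refine ⟨![n 2, 0, -n 0], ![0, n 2, -n 1], ?_, ?_, ?_⟩
    · rw [vec3_dotProduct]; simp; ring
    · rw [vec3_dotProduct]; simp; ring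
    · intro h; have := congrFun h 2; simp [cross_apply] at this; exact hi' this

lemma extra {n : V} (hn : n ≠ 0) (S : Finset V) (hS : ∀ s ∈ S, s ≠ 0) :
    ∃ w : V, n ⬝ᵥ w = 0 ∧ ∀ s ∈ S, s ⨯₃ w ≠ 0 := by
  obtain ⟨u, v, hu, hv, huv⟩ := exists_basis hn
  have hfin : (⋃ s ∈ S, {t : ℂ | s ⨯₃ (u + t • v) = 0}).Finite := by
    refine Set.Finite.biUnion S.finite_toSet ?_
    intro s hs
    apply Set.Subsingleton.finite
    intro t ht t' ht'
    by_contra hne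
    simp only [Set.mem_ofPred_eq, map_add, map_smul] at ht ht'
    have h1 : (t - t') • (s ⨯₃ v) = 0 := by
      rw [sub_smul]
      linear_combination ht - ht'
    have h2 : s ⨯₃ v = 0 := by
      rcases smul_eq_zero.mp h1 with h | h
      · exact absurd (sub_eq_zero.mp h) hne
      · exact h
    rw [h2, smul_zero, add_zero] at ht
    have hs0 := hS s hs
    rw [← neg_cross, neg_eq_zero] at h2 ht
    obtain ⟨a, rfl⟩ := parallel hs0 ht
    obtain ⟨b, rfl⟩ := parallel hs0 h2
    apply huv
    simp
  obtain ⟨t, ht⟩ := hfin.infinite_compl.nonempty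
  refine ⟨u + t • v, by simp [dotProduct_add, hu, hv], ?_⟩
  intro s hs h
  apply ht
  simp only [Set.mem_iUnion]
  exact ⟨s, hs, h⟩

/-- A line avoiding finitely many points. -/
lemma avoid (S : Finset V) (hS : ∀ s ∈ S, s ≠ 0) : ∃ n : V, n ≠ 0 ∧ ∀ s ∈ S, n ⬝ᵥ s ≠ 0 := by
  have hfin : (⋃ s ∈ S, {t : ℂ | s 0 + s 1 * t + s 2 * t ^ 2 = 0}).Finite := by
    refine Set.Finite.biUnion S.finite_toSet ?_
    intro s hs
    let f : Polynomial ℂ := Polynomial.C (s 0) + Polynomial.C (s 1) * Polynomial.X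
      + Polynomial.C (s 2) * Polynomial.X ^ 2
    have hf : f ≠ 0 := by
      intro h
      apply hS s hs
      have h0 := congrArg (fun p => Polynomial.coeff p 0) h
      have h1 := congrArg (fun p => Polynomial.coeff p 1) h
      have h2 := congrArg (fun p => Polynomial.coeff p 2) h
      simp [f, Polynomial.coeff_X, Polynomial.coeff_C, Polynomial.coeff_X_pow] at h0 h1 h2
      ext i
      fin_cases i <;> simp [*]
    refine (Polynomial.finite_setOfPred_isRoot hf).subset ?_
    intro t ht
    simpa [f, Polynomial.IsRoot] using ht
  obtain ⟨t, ht⟩ := hfin.infinite_compl.nonempty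
  refine ⟨![1, t, t ^ 2], fun h => by simpa using congrFun h 0, ?_⟩
  intro s hs h
  apply ht
  simp only [Set.mem_iUnion]
  refine ⟨s, hs, ?_⟩
  rw [vec3_dotProduct] at h
  simp at h
  simp only [Set.mem_ofPred_eq]
  linear_combination h

lemma eval_smul' {p : MvPolynomial (Fin 3) ℂ} {d : ℕ} (hp : p.IsHomogeneous d) (c : ℂ) (w : V) :
    eval (c • w) p = c ^ d * eval w p := by
  rw [eval_eq', eval_eq', Finset.mul_sum]
  refine Finset.sum_congr rfl ?_
  intro m hm
  have hd : m.degree = d := by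
    by_contra h
    exact (mem_support_iff.mp hm) (hp.coeff_eq_zero h)
  simp only [Pi.smul_apply, smul_eq_mul, mul_pow]
  rw [Finset.prod_mul_distrib, Finset.prod_pow_eq_pow_sum, ← hd, Finsupp.degree_eq_sum]
  ring

noncomputable def restr (p : MvPolynomial (Fin 3) ℂ) (u v : V) : Polynomial ℂ :=
  aeval (fun i => Polynomial.C (u i) + Polynomial.C (v i) * Polynomial.X) p

lemma eval_restr (p : MvPolynomial (Fin 3) ℂ) (u v : V) (t : ℂ) :
    (restr p u v).eval t = eval (u + t • v) p := by
  unfold restr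
  have : ((Polynomial.aeval t : Polynomial ℂ →ₐ[ℂ] ℂ).comp
      (aeval (fun i => Polynomial.C (u i) + Polynomial.C (v i) * Polynomial.X))) =
      aeval (u + t • v) := by
    apply MvPolynomial.algHom_ext
    intro i
    simp
    ring
  have h2 := DFunLike.congr_fun this p
  simpa [MvPolynomial.aeval_eq_eval, Polynomial.aeval_def] using h2

lemma restr_deg {p : MvPolynomial (Fin 3) ℂ} {d : ℕ} (hp : p.IsHomogeneous d) (u v : V) :
    (restr p u v).natDegree ≤ d := by
  unfold restr
  have := MvPolynomial.aeval_natDegree_le (m := d) (n := 1) p hp.totalDegree_le (fun i => Polynomial.C (u i) + Polynomial.C (v i) * Polynomial.X) (by intro i; compute_degree)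
  simpa using this

/-- vanishing on a punctured line extends -/
lemma extend {p : MvPolynomial (Fin 3) ℂ} {u v : V} {d : ℕ} (hp : p.IsHomogeneous d)
    (h : ∀ t : ℂ, eval (u + t • v) p = 0) (a b : ℂ) : eval (a • u + b • v) p = 0 := by
  have h1 : ∀ a : ℂ, a ≠ 0 → eval (a • u + b • v) p = 0 := by
    intro a ha
    have : a • u + b • v = a • (u + (b / a) • v) := by
      rw [smul_add, smul_smul, mul_div_cancel₀ _ ha]
    rw [this, eval_smul' hp, h, mul_zero]
  have hc : Continuous (fun a : ℂ => eval (a • u + b • v) p) :=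
    (MvPolynomial.continuous_eval p).comp (by fun_prop)
  have := Continuous.ext_on (dense_compl_singleton (0:ℂ)) hc (continuous_const (y := (0:ℂ)))
    (fun a ha => h1 a ha)
  exact congrFun this a


attribute [local instance] MvPolynomial.gradedAlgebra in
lemma hom_quot {d e : ℕ} {p l q : MvPolynomial (Fin 3) ℂ} (hp : p.IsHomogeneous (d + e))
    (hl : l.IsHomogeneous d) (h : p = l * q) :
    ∃ q' : MvPolynomial (Fin 3) ℂ, q'.IsHomogeneous e ∧ p = l * q' := by
  let q' := DirectSum.decompose (homogeneousSubmodule (Fin 3) ℂ) q e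
  refine ⟨q', q'.2, ?_⟩
  have h1 := DirectSum.coe_decompose_mul_add_of_left_mem (homogeneousSubmodule (Fin 3) ℂ)
    (i := d) (j := e) (a := l) (b := q) hl
  rw [← h, DirectSum.decompose_of_mem_same _ (show p ∈ homogeneousSubmodule (Fin 3) ℂ (d + e) from hp)] at h1
  exact h1

lemma dvd_of_vanish {p : MvPolynomial (Fin 3) ℂ} {n : V} (hn : n ≠ 0)
    (h : ∀ w : V, n ⬝ᵥ w = 0 → eval w p = 0) : lin n ∣ p := by
  obtain ⟨k, hk⟩ := Function.ne_iff.mp hn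
  have hk' : n k ≠ 0 := hk
  let σ : MvPolynomial (Fin 3) ℂ →ₐ[ℂ] MvPolynomial (Fin 3) ℂ :=
    aeval (fun i => X i - C ((Pi.single k (1 / n k) : V) i) * lin n)
  have h1 : σ p = 0 := by
    apply MvPolynomial.funext
    intro x
    have : ((aeval x : MvPolynomial (Fin 3) ℂ →ₐ[ℂ] ℂ).comp σ) =
        aeval (x - (n ⬝ᵥ x) • (Pi.single k (1 / n k) : V)) := by
      apply MvPolynomial.algHom_ext
      intro i
      simp [σ, MvPolynomial.aeval_eq_eval, eval_lin, mul_comm]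
    have h2 := DFunLike.congr_fun this p
    simp only [AlgHom.comp_apply, MvPolynomial.aeval_eq_eval] at h2
    rw [map_zero]
    refine h2.trans (h _ ?_)
    rw [dotProduct_sub, dotProduct_smul, dotProduct_single, smul_eq_mul]
    field_simp
    simp
  have h3 : (Ideal.Quotient.mkₐ ℂ (Ideal.span {lin n})).comp σ =
      Ideal.Quotient.mkₐ ℂ (Ideal.span {lin n}) := by
    apply MvPolynomial.algHom_ext
    intro i
    simp only [σ, AlgHom.comp_apply, aeval_X, Ideal.Quotient.mkₐ_eq_mk]
    rw [Ideal.Quotient.eq]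
    rw [sub_sub_cancel_left]
    exact Ideal.neg_mem_iff _ |>.mpr (Ideal.mul_mem_left _ _ (Ideal.mem_span_singleton_self _))
  have h4 := DFunLike.congr_fun h3 p
  rw [AlgHom.comp_apply, h1, map_zero, Ideal.Quotient.mkₐ_eq_mk] at h4
  exact Ideal.mem_span_singleton.mp (Ideal.Quotient.eq_zero_iff_mem.mp h4.symm)

def Good (S : Finset V) : Prop := (∀ u ∈ S, u ≠ 0) ∧ ∀ u ∈ S, ∀ v ∈ S, u ≠ v → u ⨯₃ v ≠ 0

lemma Good.mono {S T : Finset V} (h : Good S) (hT : T ⊆ S) : Good T :=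
  ⟨fun u hu => h.1 u (hT hu), fun u hu v hv => h.2 u (hT hu) v (hT hv)⟩

/-- Division by a line through many zeros. -/
lemma line_div {p : MvPolynomial (Fin 3) ℂ} {d : ℕ} (hp : p.IsHomogeneous (d + 1)) {n : V}
    (hn : n ≠ 0) (T : Finset V) (hT : Good T) (hc : d + 1 < T.card)
    (hl : ∀ w ∈ T, n ⬝ᵥ w = 0) (hz : ∀ w ∈ T, eval w p = 0) :
    ∃ q : MvPolynomial (Fin 3) ℂ, q.IsHomogeneous d ∧ p = lin n * q := by
  obtain ⟨v, hv, hTv⟩ := extra hn T hT.1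
  obtain ⟨u, hu⟩ : T.Nonempty := Finset.card_pos.mp (by omega)
  have huv := hTv u hu
  have hab : ∀ w : V, n ⬝ᵥ w = 0 → ∃ a b : ℂ, w = a • u + b • v := fun w hw =>
    span_of huv (det_zero hn (hl u hu) hv hw)
  have hex : ∀ w ∈ T, ∃ t a : ℂ, w = a • (u + t • v) := by
    intro w hw
    obtain ⟨a, b, hab⟩ := hab w (hl w hw)
    have ha : a ≠ 0 := by
      rintro rfl
      apply hTv w hw
      rw [hab]
      simp
    refine ⟨b / a, a, ?_⟩
    rw [smul_add, smul_smul, mul_div_cancel₀ _ ha, hab]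
  choose! t a hta using hex
  have hroot : ∀ w ∈ T, eval (u + t w • v) p = 0 := by
    intro w hw
    have h1 := hz w hw
    rw [hta w hw, eval_smul' hp] at h1
    rcases mul_eq_zero.mp h1 with h | h
    · exfalso
      apply hT.1 w hw
      rw [hta w hw, pow_eq_zero_iff (by omega) |>.mp h, zero_smul]
    · exact h
  have hinj : Set.InjOn t T := by
    intro w hw w' hw' htt
    by_contra hne
    apply hT.2 w hw w' hw' hne
    rw [hta w hw, hta w' hw', htt]
    simp only [map_smul, LinearMap.smul_apply, cross_self, smul_zero]
  have hzero : restr p u v = 0 := by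
    by_contra hne
    have h1 : T.image t ⊆ (restr p u v).roots.toFinset := by
      intro s hs
      obtain ⟨w, hw, rfl⟩ := Finset.mem_image.mp hs
      rw [Multiset.mem_toFinset, Polynomial.mem_roots hne, Polynomial.IsRoot, eval_restr]
      exact hroot w hw
    have h2 := Finset.card_le_card h1
    rw [Finset.card_image_of_injOn hinj] at h2
    have h3 := Multiset.toFinset_card_le (restr p u v).roots
    have h4 := Polynomial.card_roots' (restr p u v)
    have h5 := restr_deg hp u v
    omega
  have hall : ∀ t : ℂ, eval (u + t • v) p = 0 := by
    intro t
    rw [← eval_restr, hzero, Polynomial.eval_zero]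
  obtain ⟨q, hq⟩ := dvd_of_vanish (p := p) hn (by
    intro w hw
    obtain ⟨a, b, rfl⟩ := hab w hw
    exact extend hp hall a b)
  exact hom_quot (d := 1) (e := d) (by rwa [add_comm]) (lin_hom n) hq

/-- Every form of positive degree has a zero on every line. -/
lemma exists_zero {p : MvPolynomial (Fin 3) ℂ} {d : ℕ} (hp : p.IsHomogeneous (d + 1)) {n : V}
    (hn : n ≠ 0) : ∃ w : V, w ≠ 0 ∧ n ⬝ᵥ w = 0 ∧ eval w p = 0 := by
  obtain ⟨u, v, hu, hv, huv⟩ := exists_basis hn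
  by_contra! hcon
  have hu0 : u ≠ 0 := by rintro rfl; simp at huv
  have hv0 : v ≠ 0 := by rintro rfl; simp at huv
  have hnr : ∀ t : ℂ, (restr p u v).eval t ≠ 0 := by
    intro t
    rw [eval_restr]
    apply hcon
    · intro h
      apply huv
      have : u = (-t) • v := by rw [neg_smul]; exact eq_neg_of_add_eq_zero_left h
      rw [this]; simp
    · rw [dotProduct_add, dotProduct_smul, hu, hv]; simp
  have hdeg : (restr p u v).degree ≤ 0 := by
    by_contra! hd
    obtain ⟨t, ht⟩ := Complex.exists_root hd
    exact hnr t ht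
  have hconst : ∀ t : ℂ, eval (u + t • v) p = eval u p := by
    intro t
    have e := Polynomial.eq_C_of_degree_le_zero hdeg
    have e0 := eval_restr p u v 0
    rw [← eval_restr, e, Polynomial.eval_C]
    rw [e, Polynomial.eval_C] at e0
    simpa using e0
  have h1 : ∀ a : ℂ, a ≠ 0 → eval (a • u + (1:ℂ) • v) p = a ^ (d + 1) * eval u p := by
    intro a ha
    have : a • u + (1:ℂ) • v = a • (u + (1 / a) • v) := by
      rw [smul_add, smul_smul, mul_div_cancel₀ _ ha]
    rw [this, eval_smul' hp, hconst]
  have hc : Continuous (fun a : ℂ => eval (a • u + (1:ℂ) • v) p) :=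
    (MvPolynomial.continuous_eval p).comp (by fun_prop)
  have h2 := Continuous.ext_on (dense_compl_singleton (0:ℂ)) hc
    (g := fun a : ℂ => a ^ (d + 1) * eval u p) (by fun_prop) (fun a ha => h1 a ha)
  have h3 := congrFun h2 0
  simp at h3
  exact hcon v hv0 hv h3


lemma Good.insert' {T : Finset V} (hT : Good T) (hne : T.Nonempty) {w : V}
    (hw : ∀ s ∈ T, s ⨯₃ w ≠ 0) : Good (insert w T) ∧ (insert w T).card = T.card + 1 := by
  obtain ⟨s, hs⟩ := hne
  have hw0 : w ≠ 0 := by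
    rintro rfl
    apply hw s hs
    simp
  have hnot : w ∉ T := fun h => hw w h (cross_self w)
  refine ⟨⟨?_, ?_⟩, Finset.card_insert_of_notMem hnot⟩
  · intro u hu
    rcases Finset.mem_insert.mp hu with rfl | hu
    · exact hw0
    · exact hT.1 u hu
  · intro u hu v hv huv
    rcases Finset.mem_insert.mp hu with rfl | hu
    · rcases Finset.mem_insert.mp hv with rfl | hv
      · exact absurd rfl huv
      · rw [← neg_cross, neg_ne_zero]
        exact hw v hv
    · rcases Finset.mem_insert.mp hv with rfl | hv
      · exact hw u (by assumption)
      · exact hT.2 u hu v hv huv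

lemma cross_dot_left (u v : V) : (u ⨯₃ v) ⬝ᵥ u = 0 := by rw [dotProduct_comm, dot_self_cross]
lemma cross_dot_right (u v : V) : (u ⨯₃ v) ⬝ᵥ v = 0 := by rw [dotProduct_comm, dot_cross_self]

lemma line_two {N : MvPolynomial (Fin 3) ℂ} (hN : N.IsHomogeneous 1) {S : Finset V} (hS : Good S)
    {u v : V} (hu : u ∈ S) (hv : v ∈ S) (huv : u ≠ v) (h1 : eval u N = 0) (h2 : eval v N = 0) :
    ∃ c : ℂ, N = c • lin (u ⨯₃ v) := by
  have hG : Good {u, v} := hS.mono (by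
    intro x hx
    rcases Finset.mem_insert.mp hx with rfl | hx
    · exact hu
    · rw [Finset.mem_singleton.mp hx]; exact hv)
  obtain ⟨q, hq, he⟩ := line_div (d := 0) hN (hS.2 u hu v hv huv) {u, v} hG
    (by rw [Finset.card_pair huv]; norm_num)
    (by intro w hw
        rcases Finset.mem_insert.mp hw with rfl | hw
        · exact cross_dot_left _ _
        · rw [Finset.mem_singleton.mp hw]; exact cross_dot_right _ _)
    (by intro w hw
        rcases Finset.mem_insert.mp hw with rfl | hw
        · exact h1
        · rw [Finset.mem_singleton.mp hw]; exact h2)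
  have hq' := totalDegree_eq_zero_iff_eq_C.mp (Nat.le_zero.mp hq.totalDegree_le)
  refine ⟨coeff 0 q, ?_⟩
  rw [he, hq', smul_eq_C_mul, coeff_zero_C, mul_comm]

/-- residual vanishing -/
lemma residual {n w : V} {p q : MvPolynomial (Fin 3) ℂ} (he : p = lin n * q) (hn : n ⬝ᵥ w ≠ 0)
    (hp : eval w p = 0) : eval w q = 0 := by
  rw [he, map_mul, eval_lin] at hp
  exact (mul_eq_zero.mp hp).resolve_left hn

open Classical in
noncomputable def onL (S : Finset V) (n : V) : Finset V := S.filter (fun w => n ⬝ᵥ w = 0)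

open Classical in
noncomputable def offL (S : Finset V) (n : V) : Finset V := S.filter (fun w => ¬ n ⬝ᵥ w = 0)

lemma mem_onL {S : Finset V} {n w : V} : w ∈ onL S n ↔ w ∈ S ∧ n ⬝ᵥ w = 0 := by
  simp [onL]

lemma mem_offL {S : Finset V} {n w : V} : w ∈ offL S n ↔ w ∈ S ∧ ¬ n ⬝ᵥ w = 0 := by
  simp [offL]

lemma onL_subset {S : Finset V} {n : V} : onL S n ⊆ S := fun _ hw => (mem_onL.mp hw).1

lemma offL_subset {S : Finset V} {n : V} : offL S n ⊆ S := fun _ hw => (mem_offL.mp hw).1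

lemma onL_mono {S T : Finset V} (h : S ⊆ T) (n : V) : onL S n ⊆ onL T n := fun _ hw =>
  mem_onL.mpr ⟨h (mem_onL.mp hw).1, (mem_onL.mp hw).2⟩

lemma card_onoff (S : Finset V) (n : V) : (onL S n).card + (offL S n).card = S.card := by
  classical
  exact Finset.card_filter_add_card_filter_not (s := S) (fun w => n ⬝ᵥ w = 0)

/-- Two conics through five points, no four collinear, are dependent. -/
lemma five {S : Finset V} (hS : Good S) (hc : S.card = 5)
    (h4 : ∀ n : V, n ≠ 0 → (onL S n).card ≤ 3)
    {p q : MvPolynomial (Fin 3) ℂ} (hp : p.IsHomogeneous 2) (hq : q.IsHomogeneous 2)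
    (hpS : ∀ w ∈ S, eval w p = 0) (hqS : ∀ w ∈ S, eval w q = 0) :
    ∃ a b : ℂ, (a ≠ 0 ∨ b ≠ 0) ∧ a • p + b • q = 0 := by
  by_cases h3 : ∃ n : V, n ≠ 0 ∧ (onL S n).card = 3
  · obtain ⟨n, hn, hT⟩ := h3
    have hG : Good (onL S n) := hS.mono (onL_subset)
    obtain ⟨p', hp', hpe⟩ := line_div (d := 1) hp hn _ hG (by omega)
      (fun w hw => (mem_onL.mp hw).2) (fun w hw => hpS w (mem_onL.mp hw).1)
    obtain ⟨q', hq', hqe⟩ := line_div (d := 1) hq hn _ hG (by omega)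
      (fun w hw => (mem_onL.mp hw).2) (fun w hw => hqS w (mem_onL.mp hw).1)
    have hcard : (offL S n).card = 2 := by
      have := card_onoff S n
      omega
    obtain ⟨u, v, huv, hset⟩ := Finset.card_eq_two.mp hcard
    have hu : u ∈ S ∧ ¬ n ⬝ᵥ u = 0 := mem_offL.mp (by rw [hset]; simp)
    have hv : v ∈ S ∧ ¬ n ⬝ᵥ v = 0 := mem_offL.mp (by rw [hset]; simp)
    obtain ⟨a, ha⟩ := line_two hp' hS hu.1 hv.1 huv (residual hpe hu.2 (hpS u hu.1))
      (residual hpe hv.2 (hpS v hv.1))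
    obtain ⟨b, hb⟩ := line_two hq' hS hu.1 hv.1 huv (residual hqe hu.2 (hqS u hu.1))
      (residual hqe hv.2 (hqS v hv.1))
    by_cases hb0 : b = 0
    · refine ⟨0, 1, Or.inr one_ne_zero, ?_⟩
      rw [hqe, hb, hb0]; simp
    · refine ⟨b, -a, Or.inl hb0, ?_⟩
      rw [hqe, hb, hpe, ha]
      simp only [smul_eq_C_mul, map_neg]
      ring
  · push Not at h3
    have hno : ∀ n : V, n ≠ 0 → ∀ u ∈ S, ∀ v ∈ S, ∀ w ∈ S, u ≠ v → u ≠ w → v ≠ w →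
        n ⬝ᵥ u = 0 → n ⬝ᵥ v = 0 → n ⬝ᵥ w ≠ 0 := by
      intro n hn u hu v hv w hw huv huw hvw h1 h2 hw0
      have hsub : ({u, v, w} : Finset V) ⊆ onL S n := by
        intro x hx
        simp only [Finset.mem_insert, Finset.mem_singleton] at hx
        rcases hx with rfl | rfl | rfl <;> exact mem_onL.mpr ⟨by assumption, by assumption⟩
      have := Finset.card_le_card hsub
      rw [Finset.card_eq_three.mpr ⟨u, v, w, huv, huw, hvw, rfl⟩] at this
      have h5 := h4 n hn
      have h6 := h3 n hn
      omega
    obtain ⟨u, hu⟩ : S.Nonempty := Finset.card_pos.mp (by omega)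
    have hc1 := Finset.card_erase_of_mem hu
    obtain ⟨v, hv⟩ : (S.erase u).Nonempty := Finset.card_pos.mp (by omega)
    have hc2 := Finset.card_erase_of_mem hv
    obtain ⟨x, y, z, hxy, hxz, hyz, hset⟩ := Finset.card_eq_three.mp
      (show ((S.erase u).erase v).card = 3 by omega)
    have hm : ∀ t ∈ ({x, y, z} : Finset V), t ≠ v ∧ t ≠ u ∧ t ∈ S := by
      intro t ht
      rw [← hset] at ht
      simpa [Finset.mem_erase] using ht
    have hx := hm x (by simp)
    have hy := hm y (by simp)
    have hz := hm z (by simp)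
    have hvu : v ≠ u := (Finset.mem_erase.mp hv).1
    have hvS : v ∈ S := (Finset.mem_erase.mp hv).2
    set n := u ⨯₃ v with hndef
    have hn : n ≠ 0 := hS.2 u hu v hvS hvu.symm
    have hnu : n ⬝ᵥ u = 0 := cross_dot_left _ _
    have hnv : n ⬝ᵥ v = 0 := cross_dot_right _ _
    have hG2 : Good {u, v} := hS.mono (by intro t ht; simp at ht; rcases ht with rfl | rfl <;> assumption)
    obtain ⟨P, hP, hP'⟩ := extra hn {u, v} hG2.1
    obtain ⟨hG3, hc3⟩ := hG2.insert' (by simp) hP'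
    rw [Finset.card_pair hvu.symm] at hc3
    obtain ⟨a, b, hab, hPab⟩ : ∃ a b : ℂ, (a ≠ 0 ∨ b ≠ 0) ∧ a * eval P p + b * eval P q = 0 := by
      by_cases h : eval P q = 0
      · exact ⟨0, 1, Or.inr one_ne_zero, by simp [h]⟩
      · exact ⟨eval P q, - eval P p, Or.inl h, by ring⟩
    refine ⟨a, b, hab, ?_⟩
    have hr : (a • p + b • q).IsHomogeneous 2 := by
      rw [smul_eq_C_mul, smul_eq_C_mul]
      exact (hp.C_mul a).add (hq.C_mul b)
    have hrS : ∀ w ∈ S, eval w (a • p + b • q) = 0 := by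
      intro w hw
      simp [smul_eval, hpS w hw, hqS w hw]
    obtain ⟨N, hN, hNe⟩ := line_div (d := 1) hr hn (insert P {u, v}) hG3 (by omega)
      (by intro w hw
          simp only [Finset.mem_insert, Finset.mem_singleton] at hw
          rcases hw with rfl | rfl | rfl <;> assumption)
      (by intro w hw
          simp only [Finset.mem_insert, Finset.mem_singleton] at hw
          rcases hw with rfl | rfl | rfl
          · simpa [smul_eval] using hPab
          · exact hrS _ hu
          · exact hrS _ hvS)
    have hres : ∀ t ∈ S, t ≠ u → t ≠ v → eval t N = 0 := by
      intro t ht h1 h2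
      exact residual hNe (hno n hn u hu v hvS t ht hvu.symm h1.symm h2.symm hnu hnv) (hrS t ht)
    obtain ⟨c, hcN⟩ := line_two hN hS hx.2.2 hy.2.2 hxy (hres x hx.2.2 hx.2.1 hx.1)
      (hres y hy.2.2 hy.2.1 hy.1)
    have hz0 := hres z hz.2.2 hz.2.1 hz.1
    rw [hcN, smul_eval, eval_lin] at hz0
    have hc0 : c = 0 := (mul_eq_zero.mp hz0).resolve_right
      (hno _ (hS.2 x hx.2.2 y hy.2.2 hxy) x hx.2.2 y hy.2.2 z hz.2.2 hxy hxz hyz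
        (cross_dot_left _ _) (cross_dot_right _ _))
    rw [hNe, hcN, hc0]
    simp

noncomputable def comb (F G h : MvPolynomial (Fin 3) ℂ) (c : V) : MvPolynomial (Fin 3) ℂ :=
  c 0 • F + c 1 • G + c 2 • h

lemma comb_add (F G h : MvPolynomial (Fin 3) ℂ) (c c' : V) :
    comb F G h (c + c') = comb F G h c + comb F G h c' := by
  simp only [comb, Pi.add_apply, add_smul]; ring

lemma comb_smul (F G h : MvPolynomial (Fin 3) ℂ) (a : ℂ) (c : V) :
    comb F G h (a • c) = a • comb F G h c := by
  simp only [comb, Pi.smul_apply, smul_add, smul_smul, smul_eq_mul]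

lemma comb_hom {F G h : MvPolynomial (Fin 3) ℂ} (hF : F.IsHomogeneous 3) (hG : G.IsHomogeneous 3)
    (hh : h.IsHomogeneous 3) (c : V) : (comb F G h c).IsHomogeneous 3 := by
  simp only [comb, smul_eq_C_mul]
  exact ((hF.C_mul _).add (hG.C_mul _)).add (hh.C_mul _)

lemma eval_comb (F G h : MvPolynomial (Fin 3) ℂ) (c w : V) :
    eval w (comb F G h c) = ![eval w F, eval w G, eval w h] ⬝ᵥ c := by
  rw [vec3_dotProduct]
  simp [comb, smul_eval, mul_comm]

lemma eval_comb_zero {F G h : MvPolynomial (Fin 3) ℂ} (c : V) {w : V} (h1 : eval w F = 0)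
    (h2 : eval w G = 0) (h3 : eval w h = 0) : eval w (comb F G h c) = 0 := by
  simp [comb, smul_eval, h1, h2, h3]

/-- The conic residual to the line through two of the points. -/
lemma pair_conic {F G h : MvPolynomial (Fin 3) ℂ} (hF : F.IsHomogeneous 3)
    (hG : G.IsHomogeneous 3) (hh : h.IsHomogeneous 3) {S : Finset V} (hS : Good S)
    (hFS : ∀ w ∈ S, eval w F = 0) (hGS : ∀ w ∈ S, eval w G = 0) (hhS : ∀ w ∈ S, eval w h = 0)
    (hinj : ∀ c, comb F G h c = 0 → c = 0)
    (hno : ∀ n : V, n ≠ 0 → ∀ u ∈ S, ∀ v ∈ S, ∀ w ∈ S, u ≠ v → u ≠ w → v ≠ w →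
        n ⬝ᵥ u = 0 → n ⬝ᵥ v = 0 → n ⬝ᵥ w ≠ 0)
    {u v : V} (hu : u ∈ S) (hv : v ∈ S) (huv : u ≠ v) :
    ∃ (c : V) (q : MvPolynomial (Fin 3) ℂ), q.IsHomogeneous 2 ∧ q ≠ 0 ∧
      comb F G h c = lin (u ⨯₃ v) * q ∧ ∀ w ∈ S, w ≠ u → w ≠ v → eval w q = 0 := by
  set n := u ⨯₃ v with hndef
  have hn : n ≠ 0 := hS.2 u hu v hv huv
  have hnu : n ⬝ᵥ u = 0 := cross_dot_left _ _
  have hnv : n ⬝ᵥ v = 0 := cross_dot_right _ _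
  have hG2 : Good {u, v} := hS.mono (by intro t ht; simp at ht; rcases ht with rfl | rfl <;> assumption)
  obtain ⟨P, hP, hP'⟩ := extra hn {u, v} hG2.1
  obtain ⟨hG3, hc3⟩ := hG2.insert' (by simp) hP'
  rw [Finset.card_pair huv] at hc3
  obtain ⟨P2, hP2, hP2'⟩ := extra hn _ hG3.1
  obtain ⟨hG4, hc4⟩ := hG3.insert' (by simp) hP2'
  obtain ⟨c, hc0, hc⟩ := (Matrix.exists_mulVec_eq_zero_iff
    (M := Matrix.of ![![eval P F, eval P G, eval P h], ![eval P2 F, eval P2 G, eval P2 h], 0])).mpr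
    (Matrix.det_eq_zero_of_row_eq_zero 2 (by intro j; simp))
  have hcP : eval P (comb F G h c) = 0 := by
    rw [eval_comb]; exact congrFun hc 0
  have hcP2 : eval P2 (comb F G h c) = 0 := by
    rw [eval_comb]; exact congrFun hc 1
  have hcS : ∀ w ∈ S, eval w (comb F G h c) = 0 := fun w hw =>
    eval_comb_zero c (hFS w hw) (hGS w hw) (hhS w hw)
  obtain ⟨q, hq, he⟩ := line_div (d := 2) (comb_hom hF hG hh c) hn (insert P2 (insert P {u, v})) hG4
    (by omega)
    (by intro w hw
        simp only [Finset.mem_insert, Finset.mem_singleton] at hw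
        rcases hw with rfl | rfl | rfl | rfl <;> assumption)
    (by intro w hw
        simp only [Finset.mem_insert, Finset.mem_singleton] at hw
        rcases hw with rfl | rfl | rfl | rfl
        · exact hcP2
        · exact hcP
        · exact hcS _ hu
        · exact hcS _ hv)
  refine ⟨c, q, hq, ?_, he, ?_⟩
  · rintro rfl
    rw [mul_zero] at he
    exact hc0 (hinj c he)
  · intro w hw h1 h2
    exact residual he (hno n hn u hu v hv w hw huv h1.symm h2.symm hnu hnv) (hcS w hw)

lemma prop_of_dep {p q : MvPolynomial (Fin 3) ℂ} (hp : p ≠ 0) (hq : q ≠ 0) {a b : ℂ}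
    (hab : a ≠ 0 ∨ b ≠ 0) (h : a • p + b • q = 0) : ∃ l : ℂ, l ≠ 0 ∧ q = l • p := by
  have hb : b ≠ 0 := by
    rintro rfl
    rw [zero_smul, add_zero, smul_eq_zero] at h
    tauto
  have ha : a ≠ 0 := by
    rintro rfl
    rw [zero_smul, zero_add, smul_eq_zero] at h
    tauto
  refine ⟨-(a / b), neg_ne_zero.mpr (div_ne_zero ha hb), ?_⟩
  have h1 : b • q = -(a • p) := eq_neg_of_add_eq_zero_right h
  rw [neg_smul, div_eq_inv_mul, mul_smul, ← smul_neg, ← h1, smul_smul, inv_mul_cancel₀ hb, one_smul]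

theorem core {F G h : MvPolynomial (Fin 3) ℂ} (hF : F.IsHomogeneous 3)
    (hG : G.IsHomogeneous 3) (hh : h.IsHomogeneous 3) {S : Finset V} (hS : Good S)
    (hcard : S.card = 8)
    (hFS : ∀ w ∈ S, eval w F = 0) (hGS : ∀ w ∈ S, eval w G = 0) (hhS : ∀ w ∈ S, eval w h = 0)
    (hInf : ∀ (d : ℕ) (D : MvPolynomial (Fin 3) ℂ), D.IsHomogeneous (d + 1) → D ∣ F → D ∣ G → False)
    {P : V} (hPF : eval P F = 0) (hPG : eval P G = 0) (hPh : eval P h ≠ 0) : False := by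
  have hinj : ∀ c, comb F G h c = 0 → c = 0 := by
    intro c hc
    have h2 : c 2 = 0 := by
      have := congrArg (eval P) hc
      simpa [comb, smul_eval, hPF, hPG, hPh] using this
    simp only [comb, h2, zero_smul, add_zero] at hc
    by_cases h0 : c 0 = 0
    · by_cases h1 : c 1 = 0
      · ext i; fin_cases i <;> assumption
      · exfalso
        rw [h0, zero_smul, zero_add, smul_eq_zero] at hc
        have hG0 := hc.resolve_left h1
        exact hInf 2 F hF dvd_rfl (hG0 ▸ dvd_zero F)
    · exfalso
      have h3 : F = (-(c 1 / c 0)) • G := by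
        have h4 : c 0 • F = -(c 1 • G) := eq_neg_of_add_eq_zero_left hc
        rw [neg_smul, div_eq_inv_mul, mul_smul, ← smul_neg, ← h4, smul_smul, inv_mul_cancel₀ h0,
          one_smul]
      refine hInf 2 G hG ?_ dvd_rfl
      rw [h3, smul_eq_C_mul]
      exact dvd_mul_left _ _
  have h4 : ∀ n : V, n ≠ 0 → (onL S n).card ≤ 3 := by
    intro n hn
    by_contra! hlt
    have hGd : Good (onL S n) := hS.mono (onL_subset)
    obtain ⟨p, -, hp⟩ := line_div (d := 2) hF hn _ hGd hlt
      (fun w hw => (mem_onL.mp hw).2) (fun w hw => hFS w (mem_onL.mp hw).1)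
    obtain ⟨q, -, hq⟩ := line_div (d := 2) hG hn _ hGd hlt
      (fun w hw => (mem_onL.mp hw).2) (fun w hw => hGS w (mem_onL.mp hw).1)
    exact hInf 0 (lin n) (lin_hom n) ⟨p, hp⟩ ⟨q, hq⟩
  by_cases h3 : ∃ n : V, n ≠ 0 ∧ (onL S n).card = 3
  · obtain ⟨n, hn, hT⟩ := h3
    have hGd : Good (onL S n) := hS.mono (onL_subset)
    obtain ⟨R, hR, hR'⟩ := extra hn _ hGd.1
    obtain ⟨hG4, hc4⟩ := hGd.insert' (Finset.card_pos.mp (by omega)) hR'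
    obtain ⟨c, c', hc, hc', hcc⟩ : ∃ c c' : V, eval R (comb F G h c) = 0 ∧
        eval R (comb F G h c') = 0 ∧ c ⨯₃ c' ≠ 0 := by
      simp only [eval_comb]
      by_cases hf : ![eval R F, eval R G, eval R h] = 0
      · obtain ⟨c, c', -, -, hcc⟩ := exists_basis hn
        exact ⟨c, c', by simp [hf], by simp [hf], hcc⟩
      · exact exists_basis hf
    have hdiv : ∀ c, eval R (comb F G h c) = 0 → ∃ q : MvPolynomial (Fin 3) ℂ,
        q.IsHomogeneous 2 ∧ comb F G h c = lin n * q ∧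
        ∀ w ∈ offL S n, eval w q = 0 := by
      intro c hc
      have hcS : ∀ w ∈ S, eval w (comb F G h c) = 0 := fun w hw =>
        eval_comb_zero c (hFS w hw) (hGS w hw) (hhS w hw)
      obtain ⟨q, hq, he⟩ := line_div (d := 2) (comb_hom hF hG hh c) hn _ hG4 (by omega)
        (by intro w hw
            rcases Finset.mem_insert.mp hw with rfl | hw
            · exact hR
            · exact (mem_onL.mp hw).2)
        (by intro w hw
            rcases Finset.mem_insert.mp hw with rfl | hw
            · exact hc
            · exact hcS _ (mem_onL.mp hw).1)
      refine ⟨q, hq, he, ?_⟩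
      intro w hw
      exact residual he (mem_offL.mp hw).2 (hcS w (mem_offL.mp hw).1)
    obtain ⟨q, hq, he, hv⟩ := hdiv c hc
    obtain ⟨q', hq', he', hv'⟩ := hdiv c' hc'
    have hcard5 : (offL S n).card = 5 := by
      have := card_onoff S n
      omega
    obtain ⟨a, b, hab, hdep⟩ := five (hS.mono offL_subset) hcard5
      (fun m hm => (Finset.card_le_card
        (onL_mono offL_subset m)).trans (h4 m hm)) hq hq' hv hv'
    have hz : a • c + b • c' = 0 := by
      apply hinj
      rw [comb_add, comb_smul, comb_smul, he, he', ← mul_smul_comm, ← mul_smul_comm, ← mul_add,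
        hdep, mul_zero]
    apply hcc
    have e1 : b • (c ⨯₃ c') = 0 := by
      have := congrArg (fun x => c ⨯₃ x) hz
      simpa using this
    have e2 : a • (c ⨯₃ c') = 0 := by
      have := congrArg (fun x => x ⨯₃ c') hz
      simpa using this
    rcases hab with ha | hb
    · exact (smul_eq_zero.mp e2).resolve_left ha
    · exact (smul_eq_zero.mp e1).resolve_left hb
  · push Not at h3
    have hno : ∀ n : V, n ≠ 0 → ∀ u ∈ S, ∀ v ∈ S, ∀ w ∈ S, u ≠ v → u ≠ w → v ≠ w →
        n ⬝ᵥ u = 0 → n ⬝ᵥ v = 0 → n ⬝ᵥ w ≠ 0 := by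
      intro n hn u hu v hv w hw huv huw hvw h1 h2 hw0
      have hsub : ({u, v, w} : Finset V) ⊆ onL S n := by
        intro x hx
        simp only [Finset.mem_insert, Finset.mem_singleton] at hx
        rcases hx with rfl | rfl | rfl <;> exact mem_onL.mpr ⟨by assumption, by assumption⟩
      have := Finset.card_le_card hsub
      rw [Finset.card_eq_three.mpr ⟨u, v, w, huv, huw, hvw, rfl⟩] at this
      have h5 := h4 n hn
      have h6 := h3 n hn
      omega
    obtain ⟨A, hAS, hA3⟩ := Finset.exists_subset_card_eq (show 3 ≤ S.card by omega)
    obtain ⟨x, y, z, hxy, hxz, hyz, rfl⟩ := Finset.card_eq_three.mp hA3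
    have hx : x ∈ S := hAS (by simp)
    have hy : y ∈ S := hAS (by simp)
    have hz : z ∈ S := hAS (by simp)
    obtain ⟨c1, q1, hq1, hq10, he1, hv1⟩ := pair_conic hF hG hh hS hFS hGS hhS hinj hno hx hy hxy
    obtain ⟨c2, q2, hq2, hq20, he2, hv2⟩ := pair_conic hF hG hh hS hFS hGS hhS hinj hno hx hz hxz
    obtain ⟨c3, q3, hq3, hq30, he3, hv3⟩ := pair_conic hF hG hh hS hFS hGS hhS hinj hno hy hz hyz
    have hB : (S \ {x, y, z}).card = 5 := by
      rw [Finset.card_sdiff_of_subset hAS]; omega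
    have hBG : Good (S \ {x, y, z}) := hS.mono Finset.sdiff_subset
    have hB4 : ∀ n : V, n ≠ 0 → (onL (S \ {x, y, z}) n).card ≤ 3 :=
      fun m hm => (Finset.card_le_card
        (onL_mono Finset.sdiff_subset m)).trans (h4 m hm)
    have hBm : ∀ w ∈ S \ {x, y, z}, w ∈ S ∧ w ≠ x ∧ w ≠ y ∧ w ≠ z := by
      intro w hw
      simpa using hw
    have hv1' : ∀ w ∈ S \ {x, y, z}, eval w q1 = 0 := fun w hw =>
      hv1 w (hBm w hw).1 (hBm w hw).2.1 (hBm w hw).2.2.1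
    have hv2' : ∀ w ∈ S \ {x, y, z}, eval w q2 = 0 := fun w hw =>
      hv2 w (hBm w hw).1 (hBm w hw).2.1 (hBm w hw).2.2.2
    have hv3' : ∀ w ∈ S \ {x, y, z}, eval w q3 = 0 := fun w hw =>
      hv3 w (hBm w hw).1 (hBm w hw).2.2.1 (hBm w hw).2.2.2
    obtain ⟨a, b, hab, hdep⟩ := five hBG hB hB4 hq1 hq2 hv1' hv2'
    obtain ⟨l, hl, rfl⟩ := prop_of_dep hq10 hq20 hab hdep
    obtain ⟨a', b', hab', hdep'⟩ := five hBG hB hB4 hq1 hq3 hv1' hv3'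
    obtain ⟨m, hm, rfl⟩ := prop_of_dep hq10 hq30 hab' hdep'
    have hLI : LinearIndependent ℂ ![c1, c2, c3] := by
      rw [Fintype.linearIndependent_iff]
      intro g hg
      rw [Fin.sum_univ_three] at hg
      simp only [Matrix.cons_val] at hg
      have h1 : comb F G h (g 0 • c1 + g 1 • c2 + g 2 • c3) = 0 := by
        rw [hg]; simp [comb]
      rw [comb_add, comb_add, comb_smul, comb_smul, comb_smul, he1, he2, he3] at h1
      have h2 : (g 0 • lin (x ⨯₃ y) + (g 1 * l) • lin (x ⨯₃ z) + (g 2 * m) • lin (y ⨯₃ z)) * q1 = 0 := by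
        rw [← h1]
        simp only [smul_eq_C_mul, map_mul]
        ring
      have h3 := (mul_eq_zero.mp h2).resolve_right hq10
      have hnz := hno _ (hS.2 x hx y hy hxy) x hx y hy z hz hxy hxz hyz
        (cross_dot_left _ _) (cross_dot_right _ _)
      have hny := hno _ (hS.2 x hx z hz hxz) x hx z hz y hy hxz hxy hyz.symm
        (cross_dot_left _ _) (cross_dot_right _ _)
      have hnx := hno _ (hS.2 y hy z hz hyz) y hy z hz x hx hyz hxy.symm hxz.symm
        (cross_dot_left _ _) (cross_dot_right _ _)
      have ez := congrArg (eval z) h3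
      have ey := congrArg (eval y) h3
      have ex := congrArg (eval x) h3
      simp only [map_add, smul_eval, eval_lin, cross_dot_left, cross_dot_right, mul_zero, add_zero,
        zero_add, map_zero, mul_eq_zero, hnx, hny, hnz, hl, hm, or_false] at ex ey ez
      intro i
      fin_cases i <;> assumption
    let W : Submodule ℂ V :=
      { carrier := {c | q1 ∣ comb F G h c}
        add_mem' := by
          intro a b ha hb
          show q1 ∣ _
          rw [comb_add]
          exact dvd_add ha hb
        zero_mem' := by
          show q1 ∣ _
          simp [comb]
        smul_mem' := by
          intro a c hc
          show q1 ∣ _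
          rw [comb_smul, smul_eq_C_mul]
          exact Dvd.dvd.mul_left hc _ }
    have hWtop : W = ⊤ := by
      rw [eq_top_iff, ← hLI.span_eq_top_of_card_eq_finrank (by simp), Submodule.span_le]
      rintro _ ⟨i, rfl⟩
      fin_cases i
      · show q1 ∣ comb F G h c1
        rw [he1]; exact dvd_mul_left _ _
      · show q1 ∣ comb F G h c2
        rw [he2, smul_eq_C_mul, mul_left_comm, ← mul_assoc]; exact dvd_mul_left _ _
      · show q1 ∣ comb F G h c3
        rw [he3, smul_eq_C_mul, mul_left_comm, ← mul_assoc]; exact dvd_mul_left _ _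
    have hall : ∀ c, q1 ∣ comb F G h c := by
      intro c
      have : c ∈ W := by rw [hWtop]; trivial
      exact this
    refine hInf 1 q1 hq1 ?_ ?_
    · simpa [comb] using hall ![1, 0, 0]
    · simpa [comb] using hall ![0, 1, 0]

lemma rep_cross {p q : Projectivization ℂ V} (hpq : p ≠ q) : p.rep ⨯₃ q.rep ≠ 0 := by
  intro h
  obtain ⟨c, hc⟩ := parallel q.rep_nonzero h
  apply hpq
  rw [← p.mk_rep, ← q.mk_rep, Projectivization.mk_eq_mk_iff']
  exact ⟨c, hc.symm⟩

end CB

theorem stmt_1 (F G : MvPolynomial (Fin 3) ℂ)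
    (hF : F.IsHomogeneous 3) (hG : G.IsHomogeneous 3)
    (Γ : Set (Projectivization ℂ (Fin 3 → ℂ)))
    (hΓ : Γ = {p : Projectivization ℂ (Fin 3 → ℂ) | eval p.rep F = 0 ∧ eval p.rep G = 0})
    (hdeg : Γ.ncard = 9)
    (Γ₁ : Set (Projectivization ℂ (Fin 3 → ℂ))) (hsub : Γ₁ ⊆ Γ) (hcard : Γ₁.ncard = 8)
    (h : MvPolynomial (Fin 3) ℂ) (hh : h.IsHomogeneous 3)
    (hvan : ∀ p ∈ Γ₁, eval p.rep h = 0) :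
    ∀ p ∈ Γ, eval p.rep h = 0 := by
  classical
  intro p hp
  by_contra hne
  have hfin : Γ.Finite := Set.finite_of_ncard_ne_zero (by omega)
  have hfin1 : Γ₁.Finite := hfin.subset hsub
  have hmem : ∀ q ∈ Γ, eval q.rep F = 0 ∧ eval q.rep G = 0 := by
    intro q hq
    rw [hΓ] at hq
    exact hq
  have hrepinj : Function.Injective (Projectivization.rep : Projectivization ℂ (Fin 3 → ℂ) → _) := by
    intro a b hab
    by_contra hne
    apply CB.rep_cross hne
    rw [hab, cross_self]
  refine CB.core (F := F) (G := G) (h := h) (S := hfin1.toFinset.image Projectivization.rep)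
    hF hG hh ⟨?_, ?_⟩ ?_ ?_ ?_ ?_ ?_ (hmem p hp).1 (hmem p hp).2 hne
  · intro u hu
    obtain ⟨q, hq, rfl⟩ := Finset.mem_image.mp hu
    exact q.rep_nonzero
  · intro u hu v hv huv
    obtain ⟨q, hq, rfl⟩ := Finset.mem_image.mp hu
    obtain ⟨r, hr, rfl⟩ := Finset.mem_image.mp hv
    apply CB.rep_cross
    rintro rfl
    exact huv rfl
  · rw [Finset.card_image_of_injective _ hrepinj, ← Set.ncard_eq_toFinset_card _ hfin1, hcard]
  · intro u hu
    obtain ⟨q, hq, rfl⟩ := Finset.mem_image.mp hu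
    exact (hmem q (hsub (hfin1.mem_toFinset.mp hq))).1
  · intro u hu
    obtain ⟨q, hq, rfl⟩ := Finset.mem_image.mp hu
    exact (hmem q (hsub (hfin1.mem_toFinset.mp hq))).2
  · intro u hu
    obtain ⟨q, hq, rfl⟩ := Finset.mem_image.mp hu
    exact hvan q (hfin1.mem_toFinset.mp hq)
  · rintro d D hD ⟨F', hF'⟩ ⟨G', hG'⟩
    obtain ⟨n, hn, hav⟩ := CB.avoid (hfin.toFinset.image Projectivization.rep) (by
      intro u hu
      obtain ⟨q, hq, rfl⟩ := Finset.mem_image.mp hu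
      exact q.rep_nonzero)
    obtain ⟨w, hw0, hnw, hDw⟩ := CB.exists_zero hD hn
    obtain ⟨a, ha⟩ := Projectivization.exists_smul_eq_mk_rep ℂ w hw0
    have ha' : (Projectivization.mk ℂ w hw0).rep = (a : ℂ) • w := by rw [← ha]; rfl
    have hin : Projectivization.mk ℂ w hw0 ∈ Γ := by
      rw [hΓ]
      show eval _ F = 0 ∧ eval _ G = 0
      rw [ha', CB.eval_smul' hF, CB.eval_smul' hG, hF', hG']
      simp [hDw]
    apply hav _ (Finset.mem_image.mpr ⟨_, hfin.mem_toFinset.mpr hin, rfl⟩)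
    rw [ha', dotProduct_smul, hnw, smul_zero]
end

section
/- Let P be a set of at least 9 points in a plane H ⊂ ℙ³ which lies in the intersection of two cubic surfaces in ℙ³ meeting H in two distinct cubic curves. Then P satisfies the Cayley–Bacharach property for O(3) in ℙ³: every cubic form on ℙ³ vanishing on all but one point of P vanishes on all of P. -/
open MvPolynomial

namespace CB

abbrev R3 := MvPolynomial (Fin 3) ℂ
abbrev V3 := Fin 3 → ℂ

lemma finrank_H (d : ℕ) : Module.finrank ℂ (homogeneousSubmodule (Fin 3) ℂ d) = (d + 2).choose 2 := by
  have e : (homogeneousSubmodule (Fin 3) ℂ d) ≃ₗ[ℂ] ({m : Fin 3 →₀ ℕ | m.degree = d} →₀ ℂ) :=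
    (LinearEquiv.ofEq _ _ (homogeneousSubmodule_eq_finsupp_supported (Fin 3) ℂ d)).trans
      (AddMonoidAlgebra.supportedEquivFinsupp _)
  have hs : ∀ m : Fin 3 →₀ ℕ, m ∈ {m : Fin 3 →₀ ℕ | m.degree = d} ↔
      m ∈ Finset.finsuppAntidiag (Finset.univ : Finset (Fin 3)) d := by
    intro m
    simp [Finset.mem_finsuppAntidiag, Finsupp.degree_eq_sum]
  have hs' : {m : Fin 3 →₀ ℕ | m.degree = d} =
      ↑(Finset.finsuppAntidiag (Finset.univ : Finset (Fin 3)) d) := by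
    ext m; exact hs m
  rw [e.finrank_eq, hs', Module.finrank_finsupp_self]
  simp [Finset.card_finsuppAntidiag_nat_eq_choose]
  rw [Nat.add_comm 2 d, Nat.choose_symm_add]

instance (d : ℕ) : Module.Finite ℂ (homogeneousSubmodule (Fin 3) ℂ d) := by
  rw [Module.Finite.iff_fg]
  exact homogeneousSubmodule_fg _ _ d

/-- determinant of three vectors -/
def D (a b c : V3) : ℂ :=
  (a 1 * b 2 - a 2 * b 1) * c 0 + (a 2 * b 0 - a 0 * b 2) * c 1 + (a 0 * b 1 - a 1 * b 0) * c 2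

/-- the linear form of the line through two points -/
noncomputable def line (a b : V3) : R3 :=
  C (a 1 * b 2 - a 2 * b 1) * X 0 + C (a 2 * b 0 - a 0 * b 2) * X 1
    + C (a 0 * b 1 - a 1 * b 0) * X 2

lemma line_hom (a b : V3) : (line a b).IsHomogeneous 1 :=
  ((isHomogeneous_C_mul_X _ _).add (isHomogeneous_C_mul_X _ _)).add (isHomogeneous_C_mul_X _ _)

@[simp] lemma eval_line (a b c : V3) : eval c (line a b) = D a b c := by
  simp [line, D]

/-- two vectors are not proportional -/
def Ind (a b : V3) : Prop := ∃ c, D a b c ≠ 0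

set_option linter.unusedSectionVars false
section
variable {ι : Type} [DecidableEq ι] (v : ι → V3)

/-- evaluation of forms at a finite set of points -/
noncomputable def ev (d : ℕ) (T : Finset ι) : homogeneousSubmodule (Fin 3) ℂ d →ₗ[ℂ] (T → ℂ) :=
  LinearMap.pi fun j => (aeval (R := ℂ) (v j)).toLinearMap.comp (Submodule.subtype _)

@[simp] lemma ev_apply (d : ℕ) (T : Finset ι) (q) (j : T) :
    ev v d T q j = eval (v j) (q : R3) := by
  simp [ev, aeval_eq_eval]

def SepAt (d : ℕ) (i : ι) (T : Finset ι) : Prop :=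
  ∃ q : R3, q.IsHomogeneous d ∧ eval (v i) q ≠ 0 ∧ ∀ j ∈ T, eval (v j) q = 0

def Sep (d : ℕ) (T : Finset ι) : Prop := ∀ i ∈ T, SepAt v d i (T.erase i)

variable {v}

lemma mem_ker {d : ℕ} {T : Finset ι} (q : homogeneousSubmodule (Fin 3) ℂ d) :
    q ∈ LinearMap.ker (ev v d T) ↔ ∀ j ∈ T, eval (v j) (q : R3) = 0 := by
  rw [LinearMap.mem_ker]
  constructor
  · intro h j hj
    have := congrFun h ⟨j, hj⟩
    simpa using this
  · intro h
    ext j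
    simpa using h j j.2

lemma finrank_ker {d : ℕ} {T : Finset ι} (h : Sep v d T) :
    Module.finrank ℂ (LinearMap.ker (ev v d T)) + T.card = (d + 2).choose 2 := by
  have hsurj : Function.Surjective (ev v d T) := by
    rw [← LinearMap.range_eq_top, eq_top_iff]
    intro f _
    rw [pi_eq_sum_univ f]
    refine Submodule.sum_mem _ fun i _ => Submodule.smul_mem _ _ ?_
    obtain ⟨q, hq, hi, hj⟩ := h i i.2
    refine ⟨(eval (v i) q)⁻¹ • ⟨q, hq⟩, ?_⟩
    ext j
    by_cases hij : i = j
    · subst hij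
      simp [hi]
    · have : eval (v j) q = 0 := hj j (Finset.mem_erase.2 ⟨fun h => hij (Subtype.ext h.symm), j.2⟩)
      simp [hij, this]
  have := LinearMap.finrank_range_add_finrank_ker (ev v d T)
  rw [LinearMap.range_eq_top.2 hsurj, finrank_top, finrank_H] at this
  simp at this
  omega

lemma exists_form (d : ℕ) (T : Finset ι) (h : T.card < (d + 2).choose 2) :
    ∃ q : R3, q.IsHomogeneous d ∧ q ≠ 0 ∧ ∀ j ∈ T, eval (v j) q = 0 := by
  have := LinearMap.ker_ne_bot_of_finrank_lt (f := ev v d T) (by rw [finrank_H]; simpa using h)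
  obtain ⟨q, hq, hq0⟩ := Submodule.exists_mem_ne_zero_of_ne_bot this
  exact ⟨q, q.2, fun h => hq0 (Subtype.ext h), (mem_ker q).1 hq⟩

lemma dvd_of_sep {k e : ℕ} {T : Finset ι} (hT : Sep v (k + e) T)
    (hc : T.card + (e + 2).choose 2 = (k + e + 2).choose 2) {A F : R3} (hA : A.IsHomogeneous k)
    (hA0 : A ≠ 0) (hAT : ∀ j ∈ T, eval (v j) A = 0) (hF : F.IsHomogeneous (k + e))
    (hFT : ∀ j ∈ T, eval (v j) F = 0) : A ∣ F := by
  let m : homogeneousSubmodule (Fin 3) ℂ e →ₗ[ℂ] homogeneousSubmodule (Fin 3) ℂ (k + e) :=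
    ((LinearMap.mulLeft ℂ A).comp (Submodule.subtype _)).codRestrict _
      (fun q => hA.mul q.2)
  have hm : Function.Injective m := by
    intro p q h
    have : A * (p : R3) = A * (q : R3) := congrArg Subtype.val h
    exact Subtype.ext (mul_left_cancel₀ hA0 this)
  have hle : LinearMap.range m ≤ LinearMap.ker (ev v (k + e) T) := by
    rintro _ ⟨q, rfl⟩
    rw [mem_ker]
    intro j hj
    change eval (v j) (A * (q : R3)) = 0
    simp [hAT j hj]
  have heq := Submodule.eq_of_le_of_finrank_eq hle (by
    rw [LinearMap.finrank_range_of_inj hm, finrank_H]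
    have := finrank_ker hT
    omega)
  have hFm : (⟨F, hF⟩ : homogeneousSubmodule (Fin 3) ℂ (k + e)) ∈ LinearMap.range m := by
    rw [heq, mem_ker]; exact hFT
  obtain ⟨q, hq⟩ := hFm
  exact ⟨q, (congrArg Subtype.val hq).symm⟩

end

lemma hom_smul {σ : Type*} {n : ℕ} {q : MvPolynomial σ ℂ} (hq : q.IsHomogeneous n) (c : ℂ)
    (x : σ → ℂ) : eval (c • x) q = c ^ n * eval x q := by
  rw [eval_eq, eval_eq, Finset.mul_sum]
  refine Finset.sum_congr rfl fun m hm => ?_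
  have : ∑ i ∈ m.support, m i = n := (hq.degree_eq_sum_deg_support hm).symm
  simp only [Pi.smul_apply, smul_eq_mul, mul_pow, Finset.prod_mul_distrib]
  rw [Finset.prod_pow_eq_pow_sum, this]
  ring

lemma eval_aeval_poly (r : Fin 3 → Polynomial ℂ) (A : R3) (t : ℂ) :
    (aeval r A).eval t = eval (fun i => (r i).eval t) A := by
  induction A using MvPolynomial.induction_on with
  | C a => simp
  | add p q hp hq => simp [hp, hq]
  | mul_X p i hp => simp [hp]

lemma exists_root {d : ℕ} (hd : d ≠ 0) {A : R3} (hA : A.IsHomogeneous d) {o : V3}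
    (ho : eval o A ≠ 0) (u : V3) : ∃ t : ℂ, eval (u + t • o) A = 0 := by
  by_contra! hne
  let p : Polynomial ℂ := aeval (fun i => Polynomial.C (u i) + Polynomial.X * Polynomial.C (o i)) A
  let q : Polynomial ℂ := aeval (fun i => Polynomial.X * Polynomial.C (u i) + Polynomial.C (o i)) A
  have hp : ∀ t, p.eval t = eval (u + t • o) A := by
    intro t
    rw [eval_aeval_poly]; congr 1; congr 1; ext i; simp; ring
  have hq : ∀ t, q.eval t = eval (t • u + o) A := by
    intro t
    rw [eval_aeval_poly]; congr 1; congr 1; ext i; simp; ring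
  have const : ∀ r : Polynomial ℂ, (∀ t, r.eval t ≠ 0) → ∀ s t, r.eval s = r.eval t := by
    intro r hr s t
    have : r.degree = 0 := by
      by_contra h
      obtain ⟨z, hz⟩ := IsAlgClosed.exists_root r h
      exact hr z hz
    rw [Polynomial.eq_C_of_degree_eq_zero this]
    simp
  have key : ∀ t : ℂ, t ≠ 0 → eval (t • u + o) A = t ^ d * eval (u + t⁻¹ • o) A := by
    intro t ht
    rw [← hom_smul hA, smul_add, smul_smul, mul_inv_cancel₀ ht, one_smul]
  have h1 := const p (fun t => by rw [hp]; exact hne t)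
  have h2 := const q (fun t => by
    rw [hq]
    by_cases ht : t = 0
    · simpa [ht] using ho
    · rw [key t ht]
      exact mul_ne_zero (pow_ne_zero _ ht) (hne _))
  have e1 := h2 1 2
  rw [hq, hq, key 1 one_ne_zero, key 2 two_ne_zero, ← hp, ← hp, h1 _ 0] at e1
  rw [h1 2⁻¹ 0, one_pow, one_mul] at e1
  have h0 : p.eval 0 ≠ 0 := by rw [hp]; exact hne 0
  have : (2 : ℂ) ^ d = 1 := by
    have : (2 : ℂ) ^ d * p.eval 0 = 1 * p.eval 0 := by rw [← e1, one_mul]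
    exact mul_right_cancel₀ h0 this
  have h3 : (2 : ℕ) ^ d = 1 := by exact_mod_cast this
  simp [hd] at h3

/-- infinitely many projective zeros -/
lemma inf_zeros {d : ℕ} (hd : d ≠ 0) {A : R3} (hA : A.IsHomogeneous d) (hA0 : A ≠ 0) :
    ∃ z : ℂ → V3, (∀ s, eval (z s) A = 0) ∧ (∀ s, z s ≠ 0) ∧
      ∀ s s' (c : ℂ), z s = c • z s' → s = s' := by
  obtain ⟨o, ho⟩ : ∃ o, eval o A ≠ 0 := by
    by_contra! h
    exact hA0 (MvPolynomial.funext (by simpa using h))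
  have ho0 : o ≠ 0 := by
    rintro rfl
    have := hom_smul hA 0 0
    rw [zero_smul, zero_pow hd, zero_mul] at this
    exact ho this
  obtain ⟨u, w, huw⟩ : ∃ u w, D o u w ≠ 0 := by
    by_contra! h
    apply ho0
    have h0 := h ![0, 1, 0] ![0, 0, 1]
    have h1 := h ![0, 0, 1] ![1, 0, 0]
    have h2 := h ![1, 0, 0] ![0, 1, 0]
    simp [D] at h0 h1 h2
    ext i; fin_cases i <;> simp [h0, h1, h2]
  choose t ht using fun s : ℂ => exists_root hd hA ho (u + s • w)
  have k1 : ∀ s, D o (u + s • w + t s • o) w = D o u w := by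
    intro s; simp [D]; ring
  have k2 : ∀ s, D o u (u + s • w + t s • o) = s * D o u w := by
    intro s; simp [D]; ring
  refine ⟨fun s => u + s • w + t s • o, ht, ?_, ?_⟩
  · intro s h
    have := k1 s
    simp only at h
    rw [h] at this
    apply huw
    rw [← this]; simp [D]
  · intro s s' c h
    simp only at h
    have a1 := k1 s
    have a2 := k2 s
    rw [h] at a1 a2
    have b1 : D o (c • (u + s' • w + t s' • o)) w = c * D o u w := by
      rw [← k1 s']; simp [D]; ring
    have b2 : D o u (c • (u + s' • w + t s' • o)) = c * (s' * D o u w) := by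
      rw [← k2 s']; simp [D]; ring
    rw [b1] at a1
    rw [b2] at a2
    have hc : c = 1 := mul_right_cancel₀ huw (by rw [a1, one_mul])
    subst hc
    exact (mul_right_cancel₀ huw (by rw [← a2, one_mul]))

section
variable {ι : Type} [DecidableEq ι] {v : ι → V3} {F G : R3}

lemma D_rot (a b c : V3) : D a b c = D b c a := by simp [D]; ring
lemma D_swap (a b c : V3) : D a b c = - D b a c := by simp [D]; ring

lemma line_ne {a b : V3} (h : Ind a b) : line a b ≠ 0 := by
  obtain ⟨c, hc⟩ := h
  intro h0
  apply hc
  rw [← eval_line, h0]; simp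

/-- hypotheses on the configuration -/
structure Conf (v : ι → V3) (F G : R3) : Prop where
  ind : ∀ i j, i ≠ j → Ind (v i) (v j)
  hF : F.IsHomogeneous 3
  hG : G.IsHomogeneous 3
  vF : ∀ i, eval (v i) F = 0
  vG : ∀ i, eval (v i) G = 0
  nc : ∀ (A : R3) (k : ℕ), k ≠ 0 → A.IsHomogeneous k → A ≠ 0 → A ∣ F → A ∣ G → False

lemma SepAt.mul {d e : ℕ} {i : ι} {S T : Finset ι} (h : SepAt v d i S) (h' : SepAt v e i T) :
    SepAt v (d + e) i (S ∪ T) := by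
  obtain ⟨p, hp, hpi, hpS⟩ := h
  obtain ⟨q, hq, hqi, hqT⟩ := h'
  refine ⟨p * q, hp.mul hq, by simp [hpi, hqi], fun j hj => ?_⟩
  rcases Finset.mem_union.1 hj with h | h
  · simp [hpS j h]
  · simp [hqT j h]

lemma SepAt.mono {d : ℕ} {i : ι} {S T : Finset ι} (h : SepAt v d i S) (hT : T ⊆ S) :
    SepAt v d i T := by
  obtain ⟨p, hp, hpi, hpS⟩ := h
  exact ⟨p, hp, hpi, fun j hj => hpS j (hT hj)⟩

lemma sep_pair {i a b : ι} (h : D (v a) (v b) (v i) ≠ 0) : SepAt v 1 i {a, b} := by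
  refine ⟨line (v a) (v b), line_hom _ _, by simpa using h, ?_⟩
  intro j hj
  simp only [Finset.mem_insert, Finset.mem_singleton] at hj
  rcases hj with rfl | rfl <;> simp [D] <;> ring

lemma sep_one (hv : Conf v F G) {i a : ι} (h : i ≠ a) : SepAt v 1 i {a} := by
  obtain ⟨c, hc⟩ := hv.ind i a h
  refine ⟨line (v a) c, line_hom _ _, by simpa [D_rot (v i)] using hc, ?_⟩
  intro j hj
  rw [Finset.mem_singleton] at hj
  subst hj
  simp [D]; ring

lemma no4 (hv : Conf v F G) {i j k l : ι} (hij : i ≠ j) (hik : i ≠ k) (hil : i ≠ l)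
    (hjk : j ≠ k) (hjl : j ≠ l) (hkl : k ≠ l) (h1 : D (v i) (v j) (v k) = 0)
    (h2 : D (v i) (v j) (v l) = 0) : False := by
  have hcard : ({i, j, k, l} : Finset ι).card = 4 := by
    simp [*]
  have hsep : Sep v (1 + 2) ({i, j, k, l} : Finset ι) := by
    intro p hp
    have h3 : (({i, j, k, l} : Finset ι).erase p).card = 3 := by
      rw [Finset.card_erase_of_mem hp, hcard]
    obtain ⟨a, b, c, hab, hac, hbc, habc⟩ := Finset.card_eq_three.1 h3
    have hp' : ∀ x ∈ ({i, j, k, l} : Finset ι).erase p, p ≠ x := fun x hx =>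
      (Finset.ne_of_mem_erase hx).symm
    rw [habc] at hp' ⊢
    have := ((sep_one hv (hp' a (by simp))).mul ((sep_one hv (hp' b (by simp))).mul
      (sep_one hv (hp' c (by simp)))))
    exact this.mono (by intro x; simp; tauto)
  have hvan : ∀ x ∈ ({i, j, k, l} : Finset ι), eval (v x) (line (v i) (v j)) = 0 := by
    intro x hx
    simp only [Finset.mem_insert, Finset.mem_singleton] at hx
    rcases hx with rfl | rfl | rfl | rfl <;> simp [h1, h2] <;> simp [D] <;> ring
  have hne := line_ne (hv.ind i j hij)
  refine hv.nc (line (v i) (v j)) 1 one_ne_zero (line_hom _ _) hne ?_ ?_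
  · exact dvd_of_sep hsep (by rw [hcard]; rfl) (line_hom _ _) hne hvan hv.hF (fun j _ => hv.vF j)
  · exact dvd_of_sep hsep (by rw [hcard]; rfl) (line_hom _ _) hne hvan hv.hG (fun j _ => hv.vG j)

/-- at most one bad partner -/
lemma good_or (hv : Conf v F G) {i a b c : ι} (hia : i ≠ a) (hib : i ≠ b) (hic : i ≠ c)
    (hab : a ≠ b) (hac : a ≠ c) (hbc : b ≠ c) :
    SepAt v 1 i {a, b} ∨ SepAt v 1 i {a, c} := by
  by_cases h1 : D (v a) (v b) (v i) = 0
  · by_cases h2 : D (v a) (v c) (v i) = 0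
    · exfalso
      refine no4 hv hia hib hic hab hac hbc ?_ ?_
      · rw [D_rot]; exact h1
      · rw [D_rot]; exact h2
    · exact Or.inr (sep_pair h2)
  · exact Or.inl (sep_pair h1)

lemma sep4 (hv : Conf v F G) {i : ι} {T : Finset ι} (hT : T.card = 4) (hi : i ∉ T) :
    SepAt v 2 i T := by
  obtain ⟨a, T1, ha, rfl, hT1⟩ := Finset.card_eq_succ.1 hT
  obtain ⟨b, c, d, hbc, hbd, hcd, rfl⟩ := Finset.card_eq_three.1 hT1
  simp only [Finset.mem_insert, Finset.mem_singleton, not_or] at ha hi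
  obtain ⟨hab, hac, had⟩ := ha
  obtain ⟨hia, hib, hic, hid⟩ := hi
  have fin : ∀ {x y z w : ι}, SepAt v 1 i {x, y} → SepAt v 1 i {z, w} →
      ({a, b, c, d} : Finset ι) ⊆ {x, y} ∪ {z, w} → SepAt v 2 i {a, b, c, d} :=
    fun h h' hs => (h.mul h').mono hs
  by_cases h1 : D (v a) (v b) (v i) = 0
  · -- a b bad, so a c and b d are good
    have g1 : SepAt v 1 i {a, c} := by
      apply sep_pair
      intro h2
      exact no4 hv hia hib hic hab hac hbc (by rw [D_rot]; exact h1) (by rw [D_rot]; exact h2)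
    have g2 : SepAt v 1 i {b, d} := by
      apply sep_pair
      intro h2
      exact no4 hv hib hia hid (Ne.symm hab) hbd had
        (by rw [D_rot, D_swap, h1, neg_zero]) (by rw [D_rot]; exact h2)
    exact fin g1 g2 (by intro x; simp; tauto)
  · by_cases h2 : D (v c) (v d) (v i) = 0
    · have g1 : SepAt v 1 i {c, a} := by
        apply sep_pair
        intro h3
        exact no4 hv hic hid hia hcd (Ne.symm hac) (Ne.symm had) (by rw [D_rot]; exact h2)
          (by rw [D_rot]; exact h3)
      have g2 : SepAt v 1 i {d, b} := by
        apply sep_pair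
        intro h3
        exact no4 hv hid hic hib (Ne.symm hcd) (Ne.symm hbd) (Ne.symm hbc)
          (by rw [D_rot, D_swap, h2, neg_zero]) (by rw [D_rot]; exact h3)
      exact fin g1 g2 (by intro x; simp; tauto)
    · exact fin (sep_pair h1) (sep_pair h2) (by intro x; simp; tauto)

lemma sep6 (hv : Conf v F G) {i : ι} {T : Finset ι} (hT : T.card = 6) (hi : i ∉ T) :
    SepAt v 3 i T := by
  obtain ⟨a, T1, ha, rfl, hT1⟩ := Finset.card_eq_succ.1 hT
  obtain ⟨b, T2, hb, rfl, hT2⟩ := Finset.card_eq_succ.1 hT1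
  obtain ⟨c, T3, hc, rfl, hT3⟩ := Finset.card_eq_succ.1 hT2
  simp only [Finset.mem_insert, not_or] at ha hb hi
  obtain ⟨hab, hac, haT⟩ := ha
  obtain ⟨hbc, hbT⟩ := hb
  obtain ⟨hia, hib, hic, hiT⟩ := hi
  rcases good_or hv hia hib hic hab hac hbc with h | h
  · have h4 : SepAt v 2 i (insert c T3) :=
      sep4 hv (by rw [Finset.card_insert_of_notMem hc, hT3]) (by simp [hic, hiT])
    exact (h.mul h4).mono (by intro x; simp; tauto)
  · have h4 : SepAt v 2 i (insert b T3) :=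
      sep4 hv (by rw [Finset.card_insert_of_notMem hbT, hT3]) (by simp [hib, hiT])
    exact (h.mul h4).mono (by intro x; simp; tauto)

lemma no7 (hv : Conf v F G) {T : Finset ι} (hT : T.card = 7) {Q : R3} (hQ : Q.IsHomogeneous 2)
    (hQ0 : Q ≠ 0) (hQT : ∀ j ∈ T, eval (v j) Q = 0) : False := by
  have hsep : Sep v (2 + 1) T := fun i hi =>
    sep6 hv (by rw [Finset.card_erase_of_mem hi, hT]) (Finset.notMem_erase i T)
  refine hv.nc Q 2 two_ne_zero hQ hQ0 ?_ ?_
  · exact dvd_of_sep hsep (by rw [hT]; rfl) hQ hQ0 hQT hv.hF (fun j _ => hv.vF j)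
  · exact dvd_of_sep hsep (by rw [hT]; rfl) hQ hQ0 hQT hv.hG (fun j _ => hv.vG j)

lemma conic_unique (hv : Conf v F G) {T : Finset ι} (hT : T.card = 5) {Q Q' : R3}
    (hQ : Q.IsHomogeneous 2) (hQ' : Q'.IsHomogeneous 2) (hQ0 : Q ≠ 0)
    (hQT : ∀ j ∈ T, eval (v j) Q = 0) (hQT' : ∀ j ∈ T, eval (v j) Q' = 0) :
    ∃ c : ℂ, c • Q = Q' := by
  have hsep : Sep v 2 T := fun i hi =>
    sep4 hv (by rw [Finset.card_erase_of_mem hi, hT]) (Finset.notMem_erase i T)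
  have hf : Module.finrank ℂ (LinearMap.ker (ev v 2 T)) = 1 := by
    have := finrank_ker hsep
    rw [hT, show (2 + 2 : ℕ).choose 2 = 6 from rfl] at this
    omega
  let q : LinearMap.ker (ev v 2 T) := ⟨⟨Q, hQ⟩, (mem_ker _).2 hQT⟩
  let q' : LinearMap.ker (ev v 2 T) := ⟨⟨Q', hQ'⟩, (mem_ker _).2 hQT'⟩
  have hq : q ≠ 0 := fun h => hQ0 (congrArg (fun x => (x.1.1 : R3)) h)
  obtain ⟨c, hc⟩ := (finrank_eq_one_iff_of_nonzero' q hq).1 hf q'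
  exact ⟨c, congrArg (fun x => (x.1.1 : R3)) hc⟩

lemma sep7_aux (hv : Conf v F G) {i a b c : ι} {U : Finset ι} (hU : U.card = 4)
    (hia : i ≠ a) (hib : i ≠ b) (hic : i ≠ c) (hab : a ≠ b) (hac : a ≠ c) (hbc : b ≠ c)
    (hiU : i ∉ U) (haU : a ∉ U) (hbU : b ∉ U) (hcU : c ∉ U)
    (h1 : SepAt v 1 i {a, b}) (h2 : SepAt v 1 i {a, c}) :
    SepAt v 3 i (insert a (insert b (insert c U))) := by
  obtain ⟨Q, hQ, hQ0, hQU⟩ := exists_form (v := v) 2 (insert c U)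
    (by rw [Finset.card_insert_of_notMem hcU, hU]; decide)
  obtain ⟨Q', hQ', hQ0', hQU'⟩ := exists_form (v := v) 2 (insert b U)
    (by rw [Finset.card_insert_of_notMem hbU, hU]; decide)
  by_cases hi : eval (v i) Q = 0
  · by_cases hi' : eval (v i) Q' = 0
    · exfalso
      obtain ⟨t, rfl⟩ := conic_unique hv (T := insert i U)
        (by rw [Finset.card_insert_of_notMem hiU, hU]) hQ hQ' hQ0
        (by
          intro j hj
          rcases Finset.mem_insert.1 hj with rfl | hj
          · exact hi
          · exact hQU j (Finset.mem_insert_of_mem hj))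
        (by
          intro j hj
          rcases Finset.mem_insert.1 hj with rfl | hj
          · exact hi'
          · exact hQU' j (Finset.mem_insert_of_mem hj))
      have hbi : b ∉ insert i (insert c U) := by simp [hbU, hib.symm, hbc]
      have hiU' : i ∉ insert c U := by simp [hiU, hic]
      refine no7 hv (T := insert b (insert i (insert c U))) ?_ hQ' hQ0' ?_
      · rw [Finset.card_insert_of_notMem hbi, Finset.card_insert_of_notMem hiU',
          Finset.card_insert_of_notMem hcU, hU]
      · intro j hj
        rcases Finset.mem_insert.1 hj with rfl | hj
        · exact hQU' _ (Finset.mem_insert_self _ _)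
        · rcases Finset.mem_insert.1 hj with rfl | hj
          · exact hi'
          · simp [hQU j hj]
    · have h3 : SepAt v 2 i (insert b U) := ⟨Q', hQ', hi', hQU'⟩
      exact (h2.mul h3).mono (by intro x; simp; tauto)
  · have h3 : SepAt v 2 i (insert c U) := ⟨Q, hQ, hi, hQU⟩
    exact (h1.mul h3).mono (by intro x; simp; tauto)

lemma sep7 (hv : Conf v F G) {i : ι} {T : Finset ι} (hT : T.card = 7) (hi : i ∉ T) :
    SepAt v 3 i T := by
  obtain ⟨a, T1, ha, rfl, hT1⟩ := Finset.card_eq_succ.1 hT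
  obtain ⟨b, T2, hb, rfl, hT2⟩ := Finset.card_eq_succ.1 hT1
  obtain ⟨c, T3, hc, rfl, hT3⟩ := Finset.card_eq_succ.1 hT2
  obtain ⟨d, T4, hd, rfl, hT4⟩ := Finset.card_eq_succ.1 hT3
  simp only [Finset.mem_insert, not_or] at ha hb hc hi
  obtain ⟨hab, hac, had, haT⟩ := ha
  obtain ⟨hbc, hbd, hbT⟩ := hb
  obtain ⟨hcd, hcT⟩ := hc
  obtain ⟨hia, hib, hic, hid, hiT⟩ := hi
  have hU : ∀ x, x ∉ T4 → (insert x T4).card = 4 := fun x hx => by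
    rw [Finset.card_insert_of_notMem hx, hT4]
  have fin : ∀ {x y z : ι}, x ∉ T4 → y ∉ T4 → z ∉ T4 → i ≠ x → i ≠ y → i ≠ z → a ≠ x → a ≠ y →
      a ≠ z → x ≠ y → x ≠ z → y ≠ z → SepAt v 1 i {a, x} → SepAt v 1 i {a, y} →
      SepAt v 3 i (insert a (insert x (insert y (insert z T4)))) := by
    intro x y z hx hy hz hix hiy hiz hax hay haz hxy hxz hyz h1 h2
    exact sep7_aux hv (hU z hz) hia hix hiy hax hay hxy (by simp [hiz, hiT]) (by simp [haz, haT])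
      (by simp [hxz, hx]) (by simp [hyz, hy]) h1 h2
  rcases good_or hv hia hib hic hab hac hbc with h | h
  · rcases good_or hv hia hic hid hac had hcd with h' | h'
    · exact fin hbT hcT hd hib hic hid hab hac had hbc hbd hcd h h'
    · exact (fin hbT hd hcT hib hid hic hab had hac hbd hbc (Ne.symm hcd) h h').mono
        (by intro x; simp; tauto)
  · rcases good_or hv hia hib hid hab had hbd with h' | h'
    · exact fin hbT hcT hd hib hic hid hab hac had hbc hbd hcd h' h
    · exact (fin hcT hd hbT hic hid hib hac had hab hcd (Ne.symm hbc) (Ne.symm hbd) h h').mono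
        (by intro x; simp; tauto)

lemma two_dim {M : Type*} [AddCommGroup M] [Module ℂ M] (hM : Module.finrank ℂ M = 2) {f g : M}
    (hf0 : f ≠ 0) (hfg : ∀ c : ℂ, c • f ≠ g) (k : M) : ∃ s t : ℂ, s • f + t • g = k := by
  have hli : LinearIndependent ℂ ![f, g] := (LinearIndependent.pair_iff' hf0).2 hfg
  have : FiniteDimensional ℂ M := Module.finite_of_finrank_pos (by omega)
  have hspan := hli.span_eq_top_of_card_eq_finrank' (by simp [hM])
  have hk : k ∈ Submodule.span ℂ (Set.range ![f, g]) := by rw [hspan]; trivial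
  rw [Matrix.range_cons, Matrix.range_cons, Matrix.range_empty, Set.union_empty,
    Set.singleton_union, Submodule.mem_span_pair] at hk
  exact hk

lemma main (hv : Conf v F G) (hF0 : F ≠ 0) {T : Finset ι} (hT : T.card = 8) (i : ι) {h : R3}
    (hh : h.IsHomogeneous 3) (hhT : ∀ j ∈ T, eval (v j) h = 0) : eval (v i) h = 0 := by
  have hsep : Sep v 3 T := fun i hi =>
    sep7 hv (by rw [Finset.card_erase_of_mem hi, hT]) (Finset.notMem_erase i T)
  have hf : Module.finrank ℂ (LinearMap.ker (ev v 3 T)) = 2 := by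
    have := finrank_ker hsep
    rw [hT, show (3 + 2 : ℕ).choose 2 = 10 from rfl] at this
    omega
  let f : LinearMap.ker (ev v 3 T) := ⟨⟨F, hv.hF⟩, (mem_ker _).2 fun j _ => hv.vF j⟩
  let g : LinearMap.ker (ev v 3 T) := ⟨⟨G, hv.hG⟩, (mem_ker _).2 fun j _ => hv.vG j⟩
  let k : LinearMap.ker (ev v 3 T) := ⟨⟨h, hh⟩, (mem_ker _).2 hhT⟩
  have hf0 : f ≠ 0 := fun h => hF0 (congrArg (fun x => (x.1.1 : R3)) h)
  have hfg : ∀ c : ℂ, c • f ≠ g := by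
    intro c hc
    have hc' : c • F = G := congrArg (fun x => (x.1.1 : R3)) hc
    refine hv.nc F 3 three_ne_zero hv.hF hF0 dvd_rfl ?_
    rw [← hc', smul_eq_C_mul]
    exact dvd_mul_left _ _
  obtain ⟨s, t, hst⟩ := two_dim hf hf0 hfg k
  have : s • F + t • G = h := congrArg (fun x => (x.1.1 : R3)) hst
  rw [← this]
  simp [hv.vF, hv.vG]

end

lemma exists_smul_of_not_ind {a b : V3} (ha : a ≠ 0) (h : ¬ Ind a b) : ∃ t : ℂ, t • a = b := by
  simp only [Ind, not_exists, not_not] at h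
  have h0 := h ![1, 0, 0]
  have h1 := h ![0, 1, 0]
  have h2 := h ![0, 0, 1]
  simp [D] at h0 h1 h2
  obtain ⟨i, hi⟩ := Function.ne_iff.1 ha
  refine ⟨b i / a i, ?_⟩
  ext j
  simp only [Pi.zero_apply] at hi
  simp only [Pi.smul_apply, smul_eq_mul]
  rw [div_mul_eq_mul_div, div_eq_iff hi]
  fin_cases i <;> fin_cases j <;> simp only [Fin.zero_eta, Fin.mk_one, Fin.reduceFinMk] <;>
    first | ring1 | linear_combination h0 | linear_combination h1 | linear_combination h2 | linear_combination -h0 | linear_combination -h1 | linear_combination -h2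

/-- pull back a form along a linear map -/
noncomputable def pull (φ : V3 →ₗ[ℂ] (Fin 4 → ℂ)) (F : MvPolynomial (Fin 4) ℂ) : R3 :=
  aeval (fun i => ∑ j, C (φ (Pi.single j 1) i) * X j) F

lemma pull_hom (φ : V3 →ₗ[ℂ] (Fin 4 → ℂ)) {F : MvPolynomial (Fin 4) ℂ} {d : ℕ}
    (hF : F.IsHomogeneous d) : (pull φ F).IsHomogeneous d := by
  have := hF.aeval (fun i => ∑ j, C (φ (Pi.single j 1) i) * X j : Fin 4 → R3) (n := 1)
    (fun i => IsHomogeneous.sum _ _ _ fun j _ => isHomogeneous_C_mul_X _ _)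
  rwa [one_mul] at this

lemma eval_pull (φ : V3 →ₗ[ℂ] (Fin 4 → ℂ)) (F : MvPolynomial (Fin 4) ℂ) (x : V3) :
    eval x (pull φ F) = eval (φ x) F := by
  have hx : ∀ i, ∑ j, φ (Pi.single j 1) i * x j = φ x i := by
    intro i
    conv_rhs => rw [pi_eq_sum_univ' x, map_sum]
    simp [Finset.sum_apply, mul_comm]
  unfold pull
  induction F using MvPolynomial.induction_on with
  | C a => simp
  | add p q hp hq => rw [map_add, map_add, map_add, hp, hq]
  | mul_X p i hp => rw [map_mul, map_mul, hp]; simp [hx]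

end CB

/-- Let `P` be a set of at least 9 points in a plane `H ⊂ ℙ³` (the
projectivization of a 3-dimensional linear subspace `W`) which lies in the intersection of two
cubic surfaces in `ℙ³` meeting `H` in two distinct cubic curves (neither cubic vanishes
identically on `H`, and the two curves cut on `H` have no common component, i.e. their
intersection is finite). Then `P` satisfies the Cayley–Bacharach property `CB(3)` in `ℙ³`:
every cubic form on `ℙ³` vanishing on all but one point of `P` vanishes on all of `P`. -/
theorem stmt_2 (W : Submodule ℂ (Fin 4 → ℂ)) (hW : Module.finrank ℂ W = 3)
    (P : Set (Projectivization ℂ (Fin 4 → ℂ))) (hPfin : P.Finite) (hPcard : 9 ≤ P.ncard)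
    (hPW : ∀ p ∈ P, p.rep ∈ W)
    (F G : MvPolynomial (Fin 4) ℂ) (hF : F.IsHomogeneous 3) (hG : G.IsHomogeneous 3)
    (hPF : ∀ p ∈ P, eval p.rep F = 0) (hPG : ∀ p ∈ P, eval p.rep G = 0)
    (hFW : ¬ ∀ p : Projectivization ℂ (Fin 4 → ℂ), p.rep ∈ W → eval p.rep F = 0)
    (hGW : ¬ ∀ p : Projectivization ℂ (Fin 4 → ℂ), p.rep ∈ W → eval p.rep G = 0)
    (hdistinct : {p : Projectivization ℂ (Fin 4 → ℂ) |
      p.rep ∈ W ∧ eval p.rep F = 0 ∧ eval p.rep G = 0}.Finite) :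
    ∀ p ∈ P, ∀ h : MvPolynomial (Fin 4) ℂ, h.IsHomogeneous 3 →
      (∀ q ∈ P, q ≠ p → eval q.rep h = 0) → eval p.rep h = 0 := by
  
  classical
  intro p hp h hh hhp
  let e : (Fin 3 → ℂ) ≃ₗ[ℂ] W := LinearEquiv.ofFinrankEq _ _ (by simp [hW])
  let φ : (Fin 3 → ℂ) →ₗ[ℂ] (Fin 4 → ℂ) := W.subtype.comp e.toLinearMap
  have hφW : ∀ x, φ x ∈ W := fun x => (e x).2
  have hφinj : Function.Injective φ := W.subtype_injective.comp e.injective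
  have hφs : ∀ w (hw : w ∈ W), φ (e.symm ⟨w, hw⟩) = w := by
    intro w hw
    simp [φ]
  let v : P → (Fin 3 → ℂ) := fun q => e.symm ⟨q.1.rep, hPW q.1 q.2⟩
  have hφv : ∀ q : P, φ (v q) = q.1.rep := fun q => hφs _ _
  have hF0 : CB.pull φ F ≠ 0 := by
    intro h0
    apply hFW
    intro q hq
    rw [← hφs _ hq, ← CB.eval_pull, h0, map_zero]
  have hconf : CB.Conf v (CB.pull φ F) (CB.pull φ G) := by
    refine ⟨?_, CB.pull_hom φ hF, CB.pull_hom φ hG, ?_, ?_, ?_⟩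
    · intro i j hij
      by_contra hn
      have hvi : v i ≠ 0 := by
        intro h0
        have := hφv i
        rw [h0, map_zero] at this
        exact i.1.rep_nonzero this.symm
      obtain ⟨t, ht⟩ := CB.exists_smul_of_not_ind hvi hn
      apply hij
      have h1 : t • i.1.rep = j.1.rep := by rw [← hφv, ← hφv, ← ht, map_smul]
      have h2 := (Projectivization.mk_eq_mk_iff' ℂ _ _ j.1.rep_nonzero i.1.rep_nonzero).2 ⟨t, h1⟩
      rw [Projectivization.mk_rep, Projectivization.mk_rep] at h2
      exact Subtype.ext h2.symm
    · intro i
      rw [CB.eval_pull, hφv]; exact hPF _ i.2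
    · intro i
      rw [CB.eval_pull, hφv]; exact hPG _ i.2
    · intro A k hk hA hA0 hAF hAG
      obtain ⟨z, hz, hz0, hzi⟩ := CB.inf_zeros hk hA hA0
      have hφz : ∀ s, φ (z s) ≠ 0 := fun s h0 => hz0 s (hφinj (by rw [h0, map_zero]))
      have hz' : ∀ H : MvPolynomial (Fin 4) ℂ, H.IsHomogeneous 3 → A ∣ CB.pull φ H → ∀ s,
          eval (Projectivization.mk ℂ (φ (z s)) (hφz s)).rep H = 0 := by
        intro H hH hAH s
        obtain ⟨a, ha⟩ := Projectivization.exists_smul_eq_mk_rep ℂ (φ (z s)) (hφz s)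
        obtain ⟨B, hB⟩ := hAH
        rw [← ha, Units.smul_def, CB.hom_smul hH, ← CB.eval_pull, hB, map_mul, hz, zero_mul,
          mul_zero]
      refine Set.infinite_of_injective_forall_mem
        (f := fun s : ℂ => Projectivization.mk ℂ (φ (z s)) (hφz s)) ?_ ?_ hdistinct
      · intro s s' hs
        obtain ⟨c, hc⟩ := (Projectivization.mk_eq_mk_iff' ℂ _ _ _ _).1 hs
        exact hzi s s' c (hφinj (by rw [map_smul, hc]))
      · intro s
        refine ⟨?_, hz' F hF hAF s, hz' G hG hAG s⟩
        obtain ⟨a, ha⟩ := Projectivization.exists_smul_eq_mk_rep ℂ (φ (z s)) (hφz s)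
        rw [← ha, Units.smul_def]
        exact W.smul_mem _ (hφW _)
  have : Fintype P := hPfin.fintype
  have hcard : 9 ≤ Fintype.card P := by
    rwa [← Nat.card_eq_fintype_card, Nat.card_coe_set_eq]
  obtain ⟨T, hTs, hT⟩ := Finset.exists_subset_card_eq
    (s := (Finset.univ.erase (⟨p, hp⟩ : P))) (n := 8)
    (by rw [Finset.card_erase_of_mem (Finset.mem_univ _), Finset.card_univ]; exact Nat.le_sub_one_of_lt hcard)
  have := CB.main hconf hF0 hT ⟨p, hp⟩ (CB.pull_hom φ hh) (by
    intro j hj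
    rw [CB.eval_pull, hφv]
    refine hhp _ j.2 ?_
    intro hjp
    exact Finset.ne_of_mem_erase (hTs hj) (Subtype.ext hjp))
  rwa [CB.eval_pull, hφv] at this
end
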